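/- arXiv:1104.4534 — 2 statements merged into one kernel-verified Lean document; each statement's English description precedes it below -/
import Mathlib

section
/- Let n ≥ 1, let H₁, H₂ : 𝕋^n × ℝ^n → ℝ be continuous and satisfy (A1), and let c₁, c₂ > 0. Then there exists (v₁, v₂, H̄₁, H̄₂) ∈ W^{1,∞}(𝕋^n)² × ℝ² such that (v₁, v₂) is a viscosity solution of the cell system H₁(x, Dv₁) + c₁(v₁ − v₂) = H̄₁, H₂(x, Dv₂) + c₂(v₂ − v₁) = H̄₂ in 𝕋^n. Moreover, the combination c₂H̄₁ + c₁H̄₂ is unique: if (w₁, w₂, K̄₁, K̄₂) is any other such viscosity solution with constants (K̄₁, K̄₂), then c₂H̄₁ + c₁H̄₂ = c₂K̄₁ + c₁K̄₂. -/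
open MeasureTheory Filter Topology Set

noncomputable section

/-- Euclidean space `ℝ^n`; the torus `𝕋^n` is modelled by `ℤ^n`-periodic functions on it. -/
abbrev En (n : ℕ) : Type := EuclideanSpace ℝ (Fin n)

/-- The integer vector `k ∈ ℤ^n` viewed as an element of `ℝ^n`. -/
def intVec (n : ℕ) (k : Fin n → ℤ) : En n := WithLp.toLp 2 (fun i => (k i : ℝ))

/-- A `ℤ^n`-periodic function on `ℝ^n`, i.e. a function on the torus `𝕋^n`. -/
def ZPeriodic {n : ℕ} (f : En n → ℝ) : Prop :=
  ∀ (x : En n) (k : Fin n → ℤ), f (x + intVec n k) = f x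

/-- A Hamiltonian `H : 𝕋^n × ℝ^n → ℝ` (periodic in the first variable). -/
def ZPeriodicH {n : ℕ} (H : En n → En n → ℝ) : Prop :=
  ∀ (x : En n) (k : Fin n → ℤ) (p : En n), H (x + intVec n k) p = H x p

/-- A function on `𝕋^n × ℝ` (space-time, periodic in space). -/
def ZPeriodicST {n : ℕ} (u : En n × ℝ → ℝ) : Prop :=
  ∀ (x : En n) (k : Fin n → ℤ) (t : ℝ), u (x + intVec n k, t) = u (x, t)

/-- (A1): coercivity, `lim_{r→∞} inf{H(x,p) : x ∈ 𝕋^n, |p| ≥ r} = ∞`. -/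
def Coercive {n : ℕ} (H : En n → En n → ℝ) : Prop :=
  ∀ M : ℝ, ∃ r : ℝ, ∀ (x p : En n), r ≤ ‖p‖ → M ≤ H x p

/-- Coercivity for an `x`-independent Hamiltonian. -/
def CoerciveP {n : ℕ} (H : En n → ℝ) : Prop :=
  ∀ M : ℝ, ∃ r : ℝ, ∀ p : En n, r ≤ ‖p‖ → M ≤ H p

/-- Lipschitz continuity (membership in `W^{1,∞}`). -/
def IsLip {n : ℕ} (f : En n → ℝ) : Prop := ∃ K : NNReal, LipschitzWith K f

/-- Viscosity subsolution inequality for one stationary equation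
`H(x, Dw) + c (w - wo) ≤ ρ(x)` of a weakly coupled system. -/
def StatSubIneq {n : ℕ} (H : En n → En n → ℝ) (c : ℝ) (w wo : En n → ℝ) (ρ : En n → ℝ) : Prop :=
  ∀ φ : En n → ℝ, ContDiff ℝ 1 φ →
    ∀ x₀ : En n, IsLocalMax (fun x => w x - φ x) x₀ →
      H x₀ (gradient φ x₀) + c * (w x₀ - wo x₀) ≤ ρ x₀

/-- Viscosity supersolution inequality for one stationary equation. -/
def StatSuperIneq {n : ℕ} (H : En n → En n → ℝ) (c : ℝ) (w wo : En n → ℝ) (ρ : En n → ℝ) : Prop :=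
  ∀ φ : En n → ℝ, ContDiff ℝ 1 φ →
    ∀ x₀ : En n, IsLocalMin (fun x => w x - φ x) x₀ →
      ρ x₀ ≤ H x₀ (gradient φ x₀) + c * (w x₀ - wo x₀)

/-- Viscosity subsolution of the stationary system
`Hᵢ(x, Dwᵢ) + cᵢ (wᵢ - wⱼ) = ρᵢ(x)`, `i = 1,2`. -/
def CellSub {n : ℕ} (H₁ H₂ : En n → En n → ℝ) (c₁ c₂ : ℝ) (w₁ w₂ : En n → ℝ)
    (ρ₁ ρ₂ : En n → ℝ) : Prop :=
  StatSubIneq H₁ c₁ w₁ w₂ ρ₁ ∧ StatSubIneq H₂ c₂ w₂ w₁ ρ₂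

/-- Viscosity supersolution of the stationary system. -/
def CellSuper {n : ℕ} (H₁ H₂ : En n → En n → ℝ) (c₁ c₂ : ℝ) (w₁ w₂ : En n → ℝ)
    (ρ₁ ρ₂ : En n → ℝ) : Prop :=
  StatSuperIneq H₁ c₁ w₁ w₂ ρ₁ ∧ StatSuperIneq H₂ c₂ w₂ w₁ ρ₂

/-- Viscosity solution (continuous, sub- and supersolution) of the stationary system. -/
def CellSolution {n : ℕ} (H₁ H₂ : En n → En n → ℝ) (c₁ c₂ : ℝ) (v₁ v₂ : En n → ℝ)
    (ρ₁ ρ₂ : En n → ℝ) : Prop :=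
  Continuous v₁ ∧ Continuous v₂ ∧
    CellSub H₁ H₂ c₁ c₂ v₁ v₂ ρ₁ ρ₂ ∧ CellSuper H₁ H₂ c₁ c₂ v₁ v₂ ρ₁ ρ₂

/-- Subsolution of the ergodic problem (E) with constant `c` (coupling constants 1). -/
def ErgSub {n : ℕ} (H₁ H₂ : En n → En n → ℝ) (v₁ v₂ : En n → ℝ) (c : ℝ) : Prop :=
  CellSub H₁ H₂ 1 1 v₁ v₂ (fun _ => c) (fun _ => c)

/-- Supersolution of the ergodic problem (E). -/
def ErgSuper {n : ℕ} (H₁ H₂ : En n → En n → ℝ) (v₁ v₂ : En n → ℝ) (c : ℝ) : Prop :=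
  CellSuper H₁ H₂ 1 1 v₁ v₂ (fun _ => c) (fun _ => c)

/-- Viscosity solution of the ergodic problem (E):
`H₁(x,Dv₁) + v₁ - v₂ = c`, `H₂(x,Dv₂) + v₂ - v₁ = c` on `𝕋^n`. -/
def ErgSolution {n : ℕ} (H₁ H₂ : En n → En n → ℝ) (v₁ v₂ : En n → ℝ) (c : ℝ) : Prop :=
  CellSolution H₁ H₂ 1 1 v₁ v₂ (fun _ => c) (fun _ => c)

/-- Viscosity subsolution inequality for one evolution equation
`∂ₜ u + H(x, Du) + u - uo ≤ 0` in `𝕋^n × (0,∞)`. -/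
def EvolSubIneq {n : ℕ} (H : En n → En n → ℝ) (u uo : En n × ℝ → ℝ) : Prop :=
  ∀ φ : En n × ℝ → ℝ, ContDiff ℝ 1 φ →
    ∀ (x₀ : En n) (t₀ : ℝ), 0 < t₀ →
      IsLocalMax (fun q => u q - φ q) (x₀, t₀) →
      fderiv ℝ φ (x₀, t₀) (0, 1) + H x₀ (gradient (fun y => φ (y, t₀)) x₀)
        + u (x₀, t₀) - uo (x₀, t₀) ≤ 0

/-- Viscosity supersolution inequality for one evolution equation. -/
def EvolSuperIneq {n : ℕ} (H : En n → En n → ℝ) (u uo : En n × ℝ → ℝ) : Prop :=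
  ∀ φ : En n × ℝ → ℝ, ContDiff ℝ 1 φ →
    ∀ (x₀ : En n) (t₀ : ℝ), 0 < t₀ →
      IsLocalMin (fun q => u q - φ q) (x₀, t₀) →
      0 ≤ fderiv ℝ φ (x₀, t₀) (0, 1) + H x₀ (gradient (fun y => φ (y, t₀)) x₀)
        + u (x₀, t₀) - uo (x₀, t₀)

/-- Viscosity subsolution of system (C) (with coupling constants `c₁ = c₂ = 1`). -/
def SysSub {n : ℕ} (H₁ H₂ : En n → En n → ℝ) (u₁ u₂ : En n × ℝ → ℝ) : Prop :=
  EvolSubIneq H₁ u₁ u₂ ∧ EvolSubIneq H₂ u₂ u₁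

/-- Viscosity supersolution of system (C). -/
def SysSuper {n : ℕ} (H₁ H₂ : En n → En n → ℝ) (u₁ u₂ : En n × ℝ → ℝ) : Prop :=
  EvolSuperIneq H₁ u₁ u₂ ∧ EvolSuperIneq H₂ u₂ u₁

/-- Viscosity solution of the Cauchy problem (C): continuous on `𝕋^n × [0,∞)`,
sub- and supersolution, attaining the initial data. -/
def SysSolution {n : ℕ} (H₁ H₂ : En n → En n → ℝ) (u₀₁ u₀₂ : En n → ℝ)
    (u₁ u₂ : En n × ℝ → ℝ) : Prop :=
  ContinuousOn u₁ {q : En n × ℝ | 0 ≤ q.2} ∧ ContinuousOn u₂ {q : En n × ℝ | 0 ≤ q.2} ∧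
    SysSub H₁ H₂ u₁ u₂ ∧ SysSuper H₁ H₂ u₁ u₂ ∧
    (∀ x, u₁ (x, 0) = u₀₁ x) ∧ (∀ x, u₂ (x, 0) = u₀₂ x)

/-- Viscosity subsolution of the single stationary equation `H(x,Dv) ≤ c` on `𝕋^n`. -/
def SingleSub {n : ℕ} (H : En n → En n → ℝ) (v : En n → ℝ) (c : ℝ) : Prop :=
  ∀ φ : En n → ℝ, ContDiff ℝ 1 φ →
    ∀ x₀ : En n, IsLocalMax (fun x => v x - φ x) x₀ → H x₀ (gradient φ x₀) ≤ c

/-- Viscosity supersolution of the single stationary equation `H(x,Dv) ≥ c` on `𝕋^n`. -/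
def SingleSuper {n : ℕ} (H : En n → En n → ℝ) (v : En n → ℝ) (c : ℝ) : Prop :=
  ∀ φ : En n → ℝ, ContDiff ℝ 1 φ →
    ∀ x₀ : En n, IsLocalMin (fun x => v x - φ x) x₀ → c ≤ H x₀ (gradient φ x₀)

/-- Viscosity solution of the single stationary equation `H(x,Dv) = c` on `𝕋^n`. -/
def SingleSolution {n : ℕ} (H : En n → En n → ℝ) (v : En n → ℝ) (c : ℝ) : Prop :=
  Continuous v ∧ SingleSub H v c ∧ SingleSuper H v c

/-- Uniform convergence `u(·,t) → v` on `𝕋^n` as `t → ∞`. -/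
def UnifTendsTo {n : ℕ} (u : En n × ℝ → ℝ) (v : En n → ℝ) : Prop :=
  ∀ ε : ℝ, 0 < ε → ∃ T : ℝ, ∀ t : ℝ, T ≤ t → ∀ x : En n, |u (x, t) - v x| ≤ ε

/-- (A8)⁺ at level `η` with constant `ψ`. -/
def A8plusAt {n : ℕ} (H : En n → En n → ℝ) (η ψ : ℝ) : Prop :=
  ∀ (x p q : En n), η ≤ H x (p + q) → H x q ≤ 0 →
    ∀ μ : ℝ, 0 < μ → μ ≤ 1 → H x (p + q) + ψ * (1 - μ) ≤ μ * H x (μ⁻¹ • p + q)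

/-- (A8)⁻ at level `η` with constant `ψ`. -/
def A8minusAt {n : ℕ} (H : En n → En n → ℝ) (η ψ : ℝ) : Prop :=
  ∀ (x p q : En n), H x (p + q) ≤ -η → 0 ≤ H x q →
    ∀ μ : ℝ, 1 ≤ μ → μ * H x (μ⁻¹ • p + q) ≤ H x (p + q) - ψ * (μ - 1) / μ

/-- (A8)⁺ with threshold `η₀`. -/
def A8plus {n : ℕ} (H : En n → En n → ℝ) (η₀ : ℝ) : Prop :=
  ∀ η : ℝ, 0 < η → η ≤ η₀ → ∃ ψ : ℝ, 0 < ψ ∧ A8plusAt H η ψ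

/-- (A8)⁻ with threshold `η₀`. -/
def A8minus {n : ℕ} (H : En n → En n → ℝ) (η₀ : ℝ) : Prop :=
  ∀ η : ℝ, 0 < η → η ≤ η₀ → ∃ ψ : ℝ, 0 < ψ ∧ A8minusAt H η ψ

/-- The function `F` of the Key Lemma: `F(r) = C r` for `r ≥ 0`, `F(r) = r / C` for `r < 0`. -/
def Fc (C r : ℝ) : ℝ := if 0 ≤ r then C * r else r / C

/-- `α_η⁺(s)` (resp. `β_η⁺(s)` with `u = u₂`):
`min_{x ∈ 𝕋^n, t ≥ s} (u(x,t) - v(x) + η (t-s)) / (u(x,s) - v(x))`. -/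
def alphaPlus {n : ℕ} (u : En n × ℝ → ℝ) (v : En n → ℝ) (η s : ℝ) : ℝ :=
  sInf {r : ℝ | ∃ (x : En n) (t : ℝ), s ≤ t ∧
    r = (u (x, t) - v x + η * (t - s)) / (u (x, s) - v x)}

/-- `α_η⁻(s)` (resp. `β_η⁻(s)` with `u = u₂`):
`max_{x ∈ 𝕋^n, t ≥ s} (u(x,t) - v(x) - η (t-s)) / (u(x,s) - v(x))`. -/
def alphaMinus {n : ℕ} (u : En n × ℝ → ℝ) (v : En n → ℝ) (η s : ℝ) : ℝ :=
  sSup {r : ℝ | ∃ (x : En n) (t : ℝ), s ≤ t ∧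
    r = (u (x, t) - v x - η * (t - s)) / (u (x, s) - v x)}

/-- (A9)⁺. -/
def A9plus {n : ℕ} (H : En n → En n → ℝ) : Prop :=
  ∃ K : Set (En n), IsClosed K ∧ (∀ x ∈ K, ∀ k : Fin n → ℤ, x + intVec n k ∈ K) ∧
    (∀ x ∈ K, (∀ p : En n, 0 ≤ H x p) ∧ ∃ p : En n, H x p = 0) ∧
    (∀ ε : ℝ, 0 < ε → ∃ η₀ : ℝ, 0 < η₀ ∧ ∃ ψ : ℝ → ℝ, (∀ r : ℝ, 0 < r → 0 < ψ r) ∧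
      ∀ η : ℝ, 0 < η → η ≤ η₀ → ∀ (x p q : En n), ε ≤ Metric.infDist x K →
        η ≤ H x (p + q) → H x q ≤ 0 →
        ∀ μ : ℝ, 0 < μ → μ ≤ 1 → H x (p + q) + ψ η * (1 - μ) ≤ μ * H x (μ⁻¹ • p + q))

/-- (A9)⁻. -/
def A9minus {n : ℕ} (H : En n → En n → ℝ) : Prop :=
  ∃ K : Set (En n), IsClosed K ∧ (∀ x ∈ K, ∀ k : Fin n → ℤ, x + intVec n k ∈ K) ∧
    (∀ x ∈ K, (∀ p : En n, 0 ≤ H x p) ∧ ∃ p : En n, H x p = 0) ∧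
    (∀ ε : ℝ, 0 < ε → ∃ η₀ : ℝ, 0 < η₀ ∧ ∃ ψ : ℝ → ℝ, (∀ r : ℝ, 0 < r → 0 < ψ r) ∧
      ∀ η : ℝ, 0 < η → η ≤ η₀ → ∀ (x p q : En n), ε ≤ Metric.infDist x K →
        H x (p + q) ≤ -η → 0 ≤ H x q →
        ∀ μ : ℝ, 1 ≤ μ → μ * H x (μ⁻¹ • p + q) ≤ H x (p + q) - ψ η * (μ - 1) / μ)

/-- (A6): uniform convexity of an `x`-independent Hamiltonian. -/
def UnifConvex {n : ℕ} (H : En n → ℝ) : Prop :=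
  ∃ α : ℝ, 0 < α ∧ ∀ᵐ q : En n ∂volume, DifferentiableAt ℝ H q ∧
    ∀ p : En n, H q + fderiv ℝ H q (p - q) + α * ‖p - q‖ ^ 2 ≤ H p

end

section Helpers
open MeasureTheory Filter Topology Set

def SubE {n : ℕ} (H : En n → En n → ℝ) (a : ℝ) (w g : En n → ℝ) : Prop :=
  ∀ φ : En n → ℝ, ContDiff ℝ 1 φ →
    ∀ x₀ : En n, IsLocalMax (fun x => w x - φ x) x₀ →
      H x₀ (gradient φ x₀) + a * w x₀ ≤ g x₀

def SuperE {n : ℕ} (H : En n → En n → ℝ) (a : ℝ) (w g : En n → ℝ) : Prop :=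
  ∀ φ : En n → ℝ, ContDiff ℝ 1 φ →
    ∀ x₀ : En n, IsLocalMin (fun x => w x - φ x) x₀ →
      g x₀ ≤ H x₀ (gradient φ x₀) + a * w x₀

lemma gradient_neg' {n : ℕ} (φ : En n → ℝ) (x : En n) :
    gradient (fun y => - φ y) x = - gradient φ x := by
  simp [gradient, fderiv_fun_neg]

lemma superE_iff {n : ℕ} (H : En n → En n → ℝ) (a : ℝ) (w g : En n → ℝ) :
    SuperE H a w g ↔ SubE (fun x p => - H x (-p)) a (fun x => - w x) (fun x => - g x) := by
  constructor
  · intro h φ hφ x₀ hx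
    have h1 := h (fun y => - φ y) hφ.neg x₀ (by
      have := hx.neg
      refine this.congr ?_
      exact Eventually.of_forall fun x => by simp; ring)
    rw [gradient_neg'] at h1
    simp only
    linarith
  · intro h φ hφ x₀ hx
    have h1 := h (fun y => - φ y) hφ.neg x₀ (by
      have := hx.neg
      refine this.congr ?_
      exact Eventually.of_forall fun x => by simp; ring)
    rw [gradient_neg'] at h1
    simp only [neg_neg] at h1
    linarith

lemma quad_contDiff {n : ℕ} (A : ℝ) (x₀ : En n) :
    ContDiff ℝ 1 (fun x : En n => A * ‖x - x₀‖ ^ 2) :=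
  contDiff_const.mul ((contDiff_id.sub contDiff_const).norm_sq ℝ)

lemma quad_grad {n : ℕ} (A : ℝ) (x₀ x : En n) :
    HasGradientAt (fun x : En n => A * ‖x - x₀‖ ^ 2) ((2 * A) • (x - x₀)) x := by
  rw [hasGradientAt_iff_hasFDerivAt]
  have h := (((hasFDerivAt_id x).sub_const x₀).norm_sq).const_mul A
  refine h.congr_fderiv ?_
  ext v
  simp [inner_smul_left]
  ring

lemma grad_add_quad {n : ℕ} (φ : En n → ℝ) (hφ : ContDiff ℝ 1 φ) (A : ℝ) (x₀ x : En n) :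
    gradient (fun x => φ x + A * ‖x - x₀‖ ^ 2) x = gradient φ x + (2 * A) • (x - x₀) := by
  apply HasGradientAt.gradient
  have h1 := ((hφ.differentiable (by simp)) x).hasGradientAt
  have h2 := quad_grad A x₀ x
  rw [hasGradientAt_iff_hasFDerivAt] at *
  rw [map_add]
  exact h1.add h2

lemma grad_cont {n : ℕ} (φ : En n → ℝ) (hφ : ContDiff ℝ 1 φ) : Continuous (gradient φ) := by
  have := hφ.continuous_fderiv (by simp)
  unfold gradient
  exact (LinearIsometryEquiv.continuous _).comp this

lemma core {n : ℕ} (f : En n → ℝ) (x₀ : En n) (ρ : ℝ) (hρ : 0 < ρ)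
    (hf : ContinuousOn f (Metric.closedBall x₀ ρ))
    (h : ∀ y ∈ Metric.closedBall x₀ ρ, f x₀ ≤ f y → ‖y - x₀‖ < ρ) :
    ∃ y, ‖y - x₀‖ < ρ ∧ IsLocalMax f y ∧ ∀ z ∈ Metric.closedBall x₀ ρ, f z ≤ f y := by
  obtain ⟨y, hy, hmax⟩ := (isCompact_closedBall x₀ ρ).exists_isMaxOn
    ⟨x₀, Metric.mem_closedBall_self hρ.le⟩ hf
  have hlt := h y hy (hmax (Metric.mem_closedBall_self hρ.le))
  refine ⟨y, hlt, ?_, fun z hz => hmax hz⟩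
  refine hmax.isLocalMax ?_
  apply mem_of_superset (Metric.isOpen_ball.mem_nhds (x := y) (by simpa [dist_eq_norm] using hlt))
    Metric.ball_subset_closedBall

/-- stability -/
lemma stab {n : ℕ} (H : En n → En n → ℝ) (hH : Continuous fun q : En n × En n => H q.1 q.2)
    (a : ℝ) (ha : 0 ≤ a) (w g : En n → ℝ) (hw : Continuous w) (hg : Continuous g)
    (h : ∀ x₀, ∀ ε > 0, ∃ w' g' : En n → ℝ, Continuous w' ∧ SubE H a w' g' ∧
      (∀ y ∈ Metric.closedBall x₀ 1, w' y ≤ w y + ε) ∧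
      (∀ y ∈ Metric.closedBall x₀ 1, g' y ≤ g y + ε) ∧ w x₀ - ε ≤ w' x₀) :
    SubE H a w g := by
  intro φ hφ x₀ hx
  by_contra hcon
  push Not at hcon
  -- continuity of the expression
  let F : En n → ℝ := fun y => H y (gradient φ y + (2 * (1:ℝ)) • (y - x₀)) + a * w y - g y
  have hF : Continuous F := by
    have h1 : Continuous fun y : En n => (y, gradient φ y + (2 * (1:ℝ)) • (y - x₀)) :=
      continuous_id.prodMk ((grad_cont φ hφ).add (by fun_prop))
    exact ((hH.comp h1).add (hw.const_mul a)).sub hg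
  have hF0 : 0 < F x₀ := by simp [F]; linarith
  have hev : ∀ᶠ y in 𝓝 x₀, F x₀ / 2 < F y :=
    hF.continuousAt.eventually (lt_mem_nhds (by linarith))
  obtain ⟨r, hr, hball⟩ := Metric.eventually_nhds_iff_ball.1 (hev.and hx)
  let ρ := min (r / 2) 1
  have hρ : 0 < ρ := by positivity
  have hρr : ρ < r := lt_of_le_of_lt (min_le_left _ _) (by linarith)
  have hρ1 : ρ ≤ 1 := min_le_right _ _
  obtain ⟨ε, hε, hε1, hε2⟩ : ∃ ε > 0, 2 * ε < ρ ^ 2 ∧ (2 * a + 1) * ε < F x₀ / 2 := by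
    refine ⟨min (ρ ^ 2 / 4) (F x₀ / (4 * (2 * a + 1))), by positivity, ?_, ?_⟩
    · have : min (ρ ^ 2 / 4) (F x₀ / (4 * (2 * a + 1))) ≤ _ := min_le_left _ _
      nlinarith [sq_pos_of_pos hρ]
    · have : min (ρ ^ 2 / 4) (F x₀ / (4 * (2 * a + 1))) ≤ _ := min_le_right _ _
      calc _ ≤ (2 * a + 1) * (F x₀ / (4 * (2 * a + 1))) := by gcongr
        _ = F x₀ / 4 := by field_simp
        _ < _ := by linarith
  obtain ⟨w', g', hw', hsub, hle, hgle, hge⟩ := h x₀ ε hε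
  have hin : ∀ y ∈ Metric.closedBall x₀ ρ, y ∈ Metric.closedBall x₀ 1 ∧ y ∈ Metric.ball x₀ r :=
    fun y hy => ⟨Metric.closedBall_subset_closedBall hρ1 hy, Metric.closedBall_subset_ball hρr hy⟩
  obtain ⟨y, hy1, hy2, hy3⟩ := core (fun y => w' y - (φ y + 1 * ‖y - x₀‖ ^ 2)) x₀ ρ hρ
    (by have := hφ.continuous; fun_prop) (by
      intro y hy h1
      have h2 := (hball y (hin y hy).2).2
      have h3 := hle y (hin y hy).1
      simp at h1 h2
      refine lt_of_pow_lt_pow_left₀ 2 hρ.le ?_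
      linarith)
  have hyb : y ∈ Metric.closedBall x₀ ρ := by simpa [dist_eq_norm] using hy1.le
  have h4 := hy3 x₀ (Metric.mem_closedBall_self hρ.le)
  have h2 := (hball y (hin y hyb).2).2
  have h5 := hsub _ (hφ.add (quad_contDiff 1 x₀)) y hy2
  rw [grad_add_quad φ hφ] at h5
  have h6 := hgle y (hin y hyb).1
  have h7 := (hball y (hin y hyb).2).1
  simp at h4 h2
  have h8 : w y - 2 * ε ≤ w' y := by nlinarith [sq_nonneg ‖y - x₀‖]
  have h9 : a * (w y - 2 * ε) ≤ a * w' y := by gcongr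
  have h5' : F y - a * w y + g y + a * w' y ≤ g' y := by
    refine le_trans (le_of_eq ?_) h5
    simp only [F]; ring
  linarith

/-- density of touching points -/
lemma dense_touch {n : ℕ} (w : En n → ℝ) (hw : Continuous w) (B : ℝ) (hB : ∀ x, |w x| ≤ B)
    (f : En n → ℝ) (hf : Continuous f)
    (h : ∀ φ : En n → ℝ, ContDiff ℝ 1 φ → ∀ y, IsLocalMax (fun x => w x - φ x) y → f y ≤ 0) :
    ∀ x, f x ≤ 0 := by
  intro x₀
  by_contra hcon
  push Not at hcon
  obtain ⟨r, hr, hball⟩ := Metric.eventually_nhds_iff_ball.1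
    (hf.continuousAt.eventually (lt_mem_nhds hcon))
  have hB0 : 0 ≤ B := (abs_nonneg _).trans (hB x₀)
  let A := (2 * B + 1) / r ^ 2
  have hA : A * r ^ 2 = 2 * B + 1 := by simp only [A]; field_simp
  have hA0 : 0 < A := by positivity
  obtain ⟨y, hy1, hy2, -⟩ := core (fun y => w y - A * ‖y - x₀‖ ^ 2) x₀ r hr
    (by fun_prop) (by
      intro y hy h1
      simp at h1
      have := abs_le.1 (hB y)
      have := abs_le.1 (hB x₀)
      refine lt_of_pow_lt_pow_left₀ 2 hr.le ?_
      nlinarith)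
  have := h _ (quad_contDiff A x₀) y hy2
  have := hball y (by simpa [dist_eq_norm] using hy1)
  linarith

lemma cone_test {n : ℕ} (K : ℝ) (x₀ y : En n) (hy : y ≠ x₀) (hK : 0 ≤ K) :
    ∃ φ : En n → ℝ, ContDiff ℝ 1 φ ∧ (φ =ᶠ[𝓝 y] fun z => K * ‖z - x₀‖) ∧
      K ≤ ‖gradient φ y‖ := by
  have hd : 0 < ‖y - x₀‖ := norm_pos_iff.2 (sub_ne_zero.2 hy)
  let χ : ContDiffBump y := ⟨‖y - x₀‖ / 4, ‖y - x₀‖ / 2, by linarith, by linarith⟩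
  have heq : (fun z => χ z * (K * ‖z - x₀‖)) =ᶠ[𝓝 y] fun z => K * ‖z - x₀‖ := by
    filter_upwards [χ.eventuallyEq_one] with z hz
    simp [hz]
  have hcd : ∀ z, z ≠ x₀ → ContDiffAt ℝ 1 (fun z => K * ‖z - x₀‖) z := fun z hz =>
    contDiffAt_const.mul ((contDiffAt_id.sub contDiffAt_const).norm ℝ (sub_ne_zero.2 hz))
  refine ⟨fun z => χ z * (K * ‖z - x₀‖), ?_, heq, ?_⟩
  · rw [contDiff_iff_contDiffAt]
    intro z
    by_cases hz : z = x₀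
    · subst hz
      have : (fun x => χ x * (K * ‖x - z‖)) =ᶠ[𝓝 z] fun _ => 0 := by
        have : Metric.ball z (‖y - z‖ / 2) ∈ 𝓝 z := Metric.ball_mem_nhds _ (by linarith)
        filter_upwards [this] with x hx
        have : χ x = 0 := by
          apply χ.zero_of_le_dist
          show ‖y - z‖ / 2 ≤ dist x y
          have h1 := dist_triangle y x z
          rw [Metric.mem_ball] at hx
          rw [← dist_eq_norm] at *
          rw [dist_comm x y]
          linarith
        simp [this]
      exact contDiffAt_const.congr_of_eventuallyEq this
    · exact χ.contDiff.contDiffAt.mul (hcd z hz)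
  · rw [heq.gradient_eq]
    have hN : DifferentiableAt ℝ (fun v : En n => ‖v‖) (y - x₀) :=
      (contDiffAt_norm (n := 1) ℝ (sub_ne_zero.2 hy)).differentiableAt (by simp)
    have hself := hN.fderiv_norm_self
    have h1 : HasFDerivAt (fun z : En n => K * ‖z - x₀‖) (K • fderiv ℝ (fun v : En n => ‖v‖) (y - x₀)) y := by
      have := hN.hasFDerivAt.comp y ((hasFDerivAt_id y).sub_const x₀)
      exact (this.const_mul K).congr_fderiv (by ext; simp)
    have h2 : inner ℝ (gradient (fun z : En n => K * ‖z - x₀‖) y) (y - x₀) = K * ‖y - x₀‖ := by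
      rw [inner_gradient_left, h1.fderiv]
      simp [hself]
    have h3 := real_inner_le_norm (gradient (fun z : En n => K * ‖z - x₀‖) y) (y - x₀)
    rw [h2] at h3
    exact le_of_mul_le_mul_right h3 hd

lemma lip_of_grad {n : ℕ} (w : En n → ℝ) (hw : Continuous w) (B : ℝ) (hB : ∀ x, |w x| ≤ B)
    (K : NNReal)
    (h : ∀ φ : En n → ℝ, ContDiff ℝ 1 φ → ∀ y, IsLocalMax (fun x => w x - φ x) y →
      ‖gradient φ y‖ < K) : LipschitzWith K w := by
  apply LipschitzWith.of_le_add_mul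
  intro z x₀
  have hB0 : 0 ≤ B := (abs_nonneg _).trans (hB x₀)
  have hK : 0 < (K : ℝ) := by
    by_contra hK
    have hK' : (K:ℝ) ≤ 0 := not_lt.1 hK
    have := dense_touch w hw B hB (fun _ => 1) continuous_const (fun φ hφ y hy => by
      have := h φ hφ y hy
      linarith [norm_nonneg (gradient φ y)]) x₀
    norm_num at this
  let R := max ((2 * B + 1) / K) (dist z x₀)
  have hR : 2 * B + 1 ≤ K * R := by
    calc 2 * B + 1 = K * ((2 * B + 1) / K) := by field_simp
      _ ≤ _ := by gcongr; exact le_max_left _ _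
  have hR0 : 0 < R := lt_of_lt_of_le (by positivity) (le_max_left _ _)
  obtain ⟨y, hy1, hy2, hy3⟩ := core (fun y => w y - K * ‖y - x₀‖) x₀ R hR0
    (by fun_prop) (by
      intro y hy h1
      simp at h1
      have := abs_le.1 (hB y)
      have := abs_le.1 (hB x₀)
      refine lt_of_mul_lt_mul_left ?_ hK.le
      linarith)
  by_cases hyx : y = x₀
  · subst hyx
    have := hy3 z (Metric.mem_closedBall.2 (le_max_right _ _))
    rw [dist_eq_norm]
    simp at this
    linarith
  · obtain ⟨φ, hφ, heq, hge⟩ := cone_test K x₀ y hyx hK.le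
    have := h φ hφ y (hy2.congr (by filter_upwards [heq] with t ht; simp [ht]))
    linarith


lemma bump {n : ℕ} (H : En n → En n → ℝ) (hH : Continuous fun q : En n × En n => H q.1 q.2)
    (a : ℝ) (ha : 0 ≤ a) (u g : En n → ℝ) (hu : Continuous u) (hg : Continuous g)
    (hsub : SubE H a u g) (B : ℝ) (hB : ∀ x, u x ≤ B)
    (φ : En n → ℝ) (hφ : ContDiff ℝ 1 φ) (x₀ : En n) (hmin : IsLocalMin (fun x => u x - φ x) x₀)
    (hlt : H x₀ (gradient φ x₀) + a * u x₀ < g x₀) (hx₀ : u x₀ < B) :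
    ∃ U : En n → ℝ, Continuous U ∧ (∀ x, u x ≤ U x) ∧ (∀ x, U x ≤ B) ∧ u x₀ < U x₀ ∧
      SubE H a U g := by
  let ψ : En n → ℝ := fun x => φ x + (-1) * ‖x - x₀‖ ^ 2
  have hψ : ContDiff ℝ 1 ψ := hφ.add (quad_contDiff (-1) x₀)
  have hgψ : gradient ψ x₀ = gradient φ x₀ := by
    simp only [ψ]; rw [grad_add_quad φ hφ]; simp
  obtain ⟨k, hk⟩ : ∃ k, k = u x₀ - φ x₀ := ⟨_, rfl⟩
  have hψ0 : ψ x₀ + k = u x₀ := by simp [ψ, hk]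
  obtain ⟨F, hFdef⟩ : ∃ F : En n → ℝ, F = fun x => H x (gradient ψ x) + a * (ψ x + k) - g x := ⟨_, rfl⟩
  have hF : Continuous F := by
    have h1 : Continuous fun y : En n => (y, gradient ψ y) := continuous_id.prodMk (grad_cont ψ hψ)
    have := hψ.continuous
    rw [hFdef]
    exact ((hH.comp h1).add (by fun_prop)).sub hg
  have hF0 : F x₀ < 0 := by simp only [hFdef]; rw [hψ0, hgψ]; linarith
  have e1 : ∀ᶠ y in 𝓝 x₀, F y < F x₀ / 2 :=
    hF.continuousAt.eventually (gt_mem_nhds (by linarith))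
  have e2 : ∀ᶠ y in 𝓝 x₀, ψ y + k < (u x₀ + B) / 2 := by
    have : Continuous fun y => ψ y + k := hψ.continuous.add continuous_const
    exact this.continuousAt.eventually (gt_mem_nhds (by linarith))
  obtain ⟨r, hr, hball⟩ := Metric.eventually_nhds_iff_ball.1 (e1.and (e2.and hmin))
  obtain ⟨δ, hδ, hδ1, hδ2, hδ3⟩ : ∃ δ > 0, δ < (r / 2) ^ 2 ∧ a * δ ≤ - F x₀ / 2 ∧
      δ ≤ (B - u x₀) / 2 := by
    have h1 : 0 < -F x₀ / (2 * (a + 1)) := div_pos (by linarith) (by linarith)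
    refine ⟨min ((r / 2) ^ 2 / 2) (min (-F x₀ / (2 * (a + 1))) ((B - u x₀) / 2)),
      lt_min (by positivity) (lt_min h1 (by linarith)), ?_, ?_, ?_⟩
    · refine lt_of_le_of_lt (min_le_left _ _) ?_
      have : 0 < (r / 2) ^ 2 := by positivity
      linarith
    · have : min ((r / 2) ^ 2 / 2) (min (-F x₀ / (2 * (a + 1))) ((B - u x₀) / 2)) ≤
        -F x₀ / (2 * (a + 1)) := (min_le_right _ _).trans (min_le_left _ _)
      calc _ ≤ a * (-F x₀ / (2 * (a + 1))) := by gcongr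
        _ ≤ (a + 1) * (-F x₀ / (2 * (a + 1))) := by nlinarith
        _ = _ := by field_simp
    · exact (min_le_right _ _).trans (min_le_right _ _)
  classical
  let θ : En n → ℝ := fun x => ψ x + (k + δ)
  have hθc : ContDiff ℝ 1 θ := hψ.add contDiff_const
  have hθg : ∀ x, gradient θ x = gradient ψ x := fun x => by
    simp only [θ, gradient, fderiv_add_const]
  let U : En n → ℝ := fun x => if x ∈ Metric.ball x₀ r then max (u x) (θ x) else u x
  have hUin : ∀ x ∈ Metric.ball x₀ r, U x = max (u x) (θ x) := fun x hx => by simp only [U, if_pos hx]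
  have hUout : ∀ x, r / 2 ≤ ‖x - x₀‖ → U x = u x := by
    intro x hx
    by_cases hxb : x ∈ Metric.ball x₀ r
    · rw [hUin x hxb]
      apply max_eq_left
      have h1 := (hball x hxb).2.2
      have h2 : (r / 2) ^ 2 ≤ ‖x - x₀‖ ^ 2 := by gcongr
      simp only [θ, ψ]
      linarith
    · simp only [U, if_neg hxb]
  have huU : ∀ x, u x ≤ U x := by
    intro x
    by_cases hxb : x ∈ Metric.ball x₀ r
    · rw [hUin x hxb]; exact le_max_left _ _
    · simp only [U, if_neg hxb]; exact le_rfl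
  have hx₀b : x₀ ∈ Metric.ball x₀ r := Metric.mem_ball_self hr
  refine ⟨U, ?_, huU, ?_, ?_, ?_⟩
  · rw [continuous_iff_continuousAt]
    intro x
    by_cases hxb : x ∈ Metric.ball x₀ r
    · have : U =ᶠ[𝓝 x] fun x => max (u x) (θ x) := by
        filter_upwards [Metric.isOpen_ball.mem_nhds hxb] with y hy using hUin y hy
      exact (hu.max hθc.continuous).continuousAt.congr this.symm
    · have : U =ᶠ[𝓝 x] u := by
        have hx' : r / 2 < ‖x - x₀‖ := by
          rw [Metric.mem_ball, dist_eq_norm] at hxb; linarith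
        have hc : Continuous fun y : En n => ‖y - x₀‖ := by fun_prop
        filter_upwards [hc.continuousAt.eventually (lt_mem_nhds hx')] with y hy
        exact hUout y hy.le
      exact hu.continuousAt.congr this.symm
  · intro x
    by_cases hxb : x ∈ Metric.ball x₀ r
    · rw [hUin x hxb]
      refine max_le (hB x) ?_
      have := (hball x hxb).2.1
      simp only [θ]; linarith
    · simp only [U, if_neg hxb]; exact hB x
  · rw [hUin x₀ hx₀b]
    refine lt_of_lt_of_le ?_ (le_max_right _ _)
    simp only [θ]; linarith
  · intro χ hχ y hy
    rcases (huU y).eq_or_lt with h | h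
    · rw [← h]
      apply hsub χ hχ y
      filter_upwards [hy] with z hz
      have := huU z
      linarith
    · have hyb : y ∈ Metric.ball x₀ r := by
        by_contra hyb
        simp only [U, if_neg hyb] at h
        exact lt_irrefl _ h
      have hUy : U y = θ y := by
        rw [hUin y hyb] at h ⊢
        rcases max_choice (u y) (θ y) with h' | h'
        · rw [h'] at h; exact absurd h (lt_irrefl _)
        · exact h'
      have hmax : IsLocalMax (fun z => θ z - χ z) y := by
        filter_upwards [hy, Metric.isOpen_ball.mem_nhds hyb] with z hz hzb
        have h1 : θ z ≤ U z := by rw [hUin z hzb]; exact le_max_right _ _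
        linarith
      have hgrad : gradient χ y = gradient ψ y := by
        rw [← hθg y]
        have hd := hmax.fderiv_eq_zero
        rw [fderiv_fun_sub ((hθc.differentiable (by simp)) y) ((hχ.differentiable (by simp)) y), sub_eq_zero] at hd
        simp only [gradient, hd]
      have h1 := (hball y hyb).1
      rw [hgrad, hUy]
      simp only [hFdef] at h1 hδ2 
      simp only [θ]
      linarith

structure Fam {n : ℕ} (H₁ H₂ : En n → En n → ℝ) (c₁ c₂ l B : ℝ) (w₁ w₂ : En n → ℝ) : Prop where
  cont₁ : Continuous w₁
  cont₂ : Continuous w₂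
  bd₁ : ∀ x, |w₁ x| ≤ B
  bd₂ : ∀ x, |w₂ x| ≤ B
  sub₁ : SubE H₁ (l + c₁) w₁ (fun x => c₁ * w₂ x)
  sub₂ : SubE H₂ (l + c₂) w₂ (fun x => c₂ * w₁ x)

lemma Fam.swap {n : ℕ} {H₁ H₂ : En n → En n → ℝ} {c₁ c₂ l B : ℝ} {w₁ w₂ : En n → ℝ}
    (h : Fam H₁ H₂ c₁ c₂ l B w₁ w₂) : Fam H₂ H₁ c₂ c₁ l B w₂ w₁ :=
  ⟨h.cont₂, h.cont₁, h.bd₂, h.bd₁, h.sub₂, h.sub₁⟩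

lemma fam_const {n : ℕ} (H₁ H₂ : En n → En n → ℝ) (c₁ c₂ l B : ℝ) (hB : 0 ≤ B)
    (h1 : ∀ x, H₁ x 0 ≤ l * B) (h2 : ∀ x, H₂ x 0 ≤ l * B) :
    Fam H₁ H₂ c₁ c₂ l B (fun _ => -B) (fun _ => -B) := by
  have key : ∀ (H : En n → En n → ℝ) (c : ℝ), (∀ x, H x 0 ≤ l * B) →
      SubE H (l + c) (fun _ => -B) (fun _ => c * (-B)) := by
    intro H c h φ hφ x₀ hx
    have : gradient φ x₀ = 0 := by
      have hd := hx.fderiv_eq_zero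
      simp only [fderiv_const_sub, neg_eq_zero] at hd
      simp [gradient, hd]
    rw [this]
    have := h x₀
    linarith
  exact ⟨continuous_const, continuous_const, fun _ => by simp [abs_of_nonneg hB],
    fun _ => by simp [abs_of_nonneg hB], key _ _ h1, key _ _ h2⟩

lemma Fam.diff_le {n : ℕ} {H₁ H₂ : En n → En n → ℝ} {c₁ c₂ l B : ℝ} {w₁ w₂ : En n → ℝ}
    (h : Fam H₁ H₂ c₁ c₂ l B w₁ w₂) (hl : 0 ≤ l) (m : ℝ) (hm : ∀ x p, -m ≤ H₁ x p) (x : En n) :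
    c₁ * (w₁ x - w₂ x) ≤ l * B + m := by
  have := dense_touch w₁ h.cont₁ B h.bd₁ (fun x => c₁ * (w₁ x - w₂ x) - (l * B + m))
    (by have := h.cont₁; have := h.cont₂; fun_prop) (by
      intro φ hφ y hy
      have h1 := h.sub₁ φ hφ y hy
      have h2 := hm y (gradient φ y)
      have h3 : l * (-B) ≤ l * w₁ y := by gcongr; exact (abs_le.1 (h.bd₁ y)).1
      simp only at h1 ⊢
      linarith) x
  linarith

lemma Fam.lip {n : ℕ} {H₁ H₂ : En n → En n → ℝ} {c₁ c₂ l B : ℝ} {w₁ w₂ : En n → ℝ}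
    (h : Fam H₁ H₂ c₁ c₂ l B w₁ w₂) (hl : 0 ≤ l) (D : ℝ) (hc₁ : 0 < c₁)
    (hD : ∀ x, w₂ x - w₁ x ≤ D) (K : NNReal)
    (hK : ∀ x p, (K : ℝ) ≤ ‖p‖ → l * B + c₁ * D + 1 ≤ H₁ x p) : LipschitzWith K w₁ := by
  refine lip_of_grad w₁ h.cont₁ B h.bd₁ K ?_
  intro φ hφ y hy
  by_contra hcon
  have h0 := hK y _ (not_lt.1 hcon)
  have h1 := h.sub₁ φ hφ y hy
  have h3 : l * (-B) ≤ l * w₁ y := by gcongr; exact (abs_le.1 (h.bd₁ y)).1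
  have h4 : c₁ * (w₂ y - w₁ y) ≤ c₁ * D := by gcongr; exact hD y
  simp only at h1
  linarith

noncomputable def Per {n : ℕ} (H₁ H₂ : En n → En n → ℝ) (c₁ c₂ l B : ℝ) (x : En n) : ℝ :=
  sSup {r | ∃ w₁ w₂, Fam H₁ H₂ c₁ c₂ l B w₁ w₂ ∧ r = w₁ x}

lemma le_per {n : ℕ} {H₁ H₂ : En n → En n → ℝ} {c₁ c₂ l B : ℝ} {w₁ w₂ : En n → ℝ}
    (h : Fam H₁ H₂ c₁ c₂ l B w₁ w₂) (x : En n) : w₁ x ≤ Per H₁ H₂ c₁ c₂ l B x := by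
  refine le_csSup ⟨B, ?_⟩ ⟨w₁, w₂, h, rfl⟩
  rintro r ⟨w₁, w₂, h, rfl⟩
  exact (abs_le.1 (h.bd₁ x)).2

lemma per_le {n : ℕ} {H₁ H₂ : En n → En n → ℝ} {c₁ c₂ l B : ℝ} {w₁ w₂ : En n → ℝ}
    (h : Fam H₁ H₂ c₁ c₂ l B w₁ w₂) (x : En n) (b : ℝ)
    (hb : ∀ w₁ w₂, Fam H₁ H₂ c₁ c₂ l B w₁ w₂ → w₁ x ≤ b) : Per H₁ H₂ c₁ c₂ l B x ≤ b := by
  refine csSup_le ⟨_, w₁, w₂, h, rfl⟩ ?_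
  rintro r ⟨w₁, w₂, h, rfl⟩
  exact hb _ _ h

lemma exists_near_per {n : ℕ} {H₁ H₂ : En n → En n → ℝ} {c₁ c₂ l B : ℝ} {w₁ w₂ : En n → ℝ}
    (h : Fam H₁ H₂ c₁ c₂ l B w₁ w₂) (x : En n) (ε : ℝ) (hε : 0 < ε) :
    ∃ w₁ w₂, Fam H₁ H₂ c₁ c₂ l B w₁ w₂ ∧ Per H₁ H₂ c₁ c₂ l B x - ε ≤ w₁ x := by
  by_contra hcon
  push Not at hcon
  have := per_le h x (Per H₁ H₂ c₁ c₂ l B x - ε) (fun w₁ w₂ hw => (hcon w₁ w₂ hw).le)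
  linarith

lemma gradient_shift {n : ℕ} (φ : En n → ℝ) (x k : En n) :
    gradient (fun y => φ (y + k)) x = gradient φ (x + k) := by
  simp [gradient, fderiv_comp_add_right]

lemma subE_shift {n : ℕ} {H : En n → En n → ℝ} (hper : ZPeriodicH H) {a : ℝ} {w g : En n → ℝ}
    (h : SubE H a w g) (k : Fin n → ℤ) :
    SubE H a (fun x => w (x + intVec n k)) (fun x => g (x + intVec n k)) := by
  intro φ hφ x₀ hx
  have h1 := h (fun y => φ (y - intVec n k)) (hφ.comp (contDiff_id.sub contDiff_const))
    (x₀ + intVec n k) (by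
      have ht : Tendsto (fun y => y - intVec n k) (𝓝 (x₀ + intVec n k)) (𝓝 x₀) := by
        have : Continuous (fun y : En n => y - intVec n k) := by fun_prop
        simpa using this.tendsto (x₀ + intVec n k)
      filter_upwards [ht.eventually hx] with y hy
      simpa using hy)
  have h2 := gradient_shift (n := n) φ (x₀ + intVec n k) (- intVec n k)
  simp only [← sub_eq_add_neg, add_sub_cancel_right] at h2
  rw [h2, hper] at h1
  exact h1

lemma Fam.shift {n : ℕ} {H₁ H₂ : En n → En n → ℝ} {c₁ c₂ l B : ℝ} {w₁ w₂ : En n → ℝ}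
    (h : Fam H₁ H₂ c₁ c₂ l B w₁ w₂) (h₁ : ZPeriodicH H₁) (h₂ : ZPeriodicH H₂) (k : Fin n → ℤ) :
    Fam H₁ H₂ c₁ c₂ l B (fun x => w₁ (x + intVec n k)) (fun x => w₂ (x + intVec n k)) := by
  have h3 := h.cont₁
  have h4 := h.cont₂
  exact ⟨by fun_prop, by fun_prop, fun x => h.bd₁ _, fun x => h.bd₂ _, subE_shift h₁ h.sub₁ k,
    subE_shift h₂ h.sub₂ k⟩

lemma intVec_neg {n : ℕ} (k : Fin n → ℤ) : intVec n (-k) = - intVec n k := by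
  ext i; simp [intVec]

lemma per_periodic {n : ℕ} {H₁ H₂ : En n → En n → ℝ} {c₁ c₂ l B : ℝ} {w₁ w₂ : En n → ℝ}
    (h : Fam H₁ H₂ c₁ c₂ l B w₁ w₂) (h₁ : ZPeriodicH H₁) (h₂ : ZPeriodicH H₂) :
    ZPeriodic (Per H₁ H₂ c₁ c₂ l B) := by
  have key : ∀ x k, Per H₁ H₂ c₁ c₂ l B (x + intVec n k) ≤ Per H₁ H₂ c₁ c₂ l B x := by
    intro x k
    refine per_le h _ _ fun w₁ w₂ hw => ?_
    exact le_per (hw.shift h₁ h₂ k) x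
  intro x k
  refine le_antisymm (key x k) ?_
  have := key (x + intVec n k) (-k)
  rwa [intVec_neg, add_neg_cancel_right] at this

/-- Perron sub -/
lemma per_sub {n : ℕ} {H₁ H₂ : En n → En n → ℝ} (hH : Continuous fun q : En n × En n => H₁ q.1 q.2)
    {c₁ c₂ l B : ℝ} (hl : 0 ≤ l) (hc₁ : 0 ≤ c₁) {w₁ w₂ : En n → ℝ}
    (h : Fam H₁ H₂ c₁ c₂ l B w₁ w₂) 
    (hu₁ : Continuous (Per H₁ H₂ c₁ c₂ l B)) (hu₂ : Continuous (Per H₂ H₁ c₂ c₁ l B)) :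
    SubE H₁ (l + c₁) (Per H₁ H₂ c₁ c₂ l B) (fun x => c₁ * Per H₂ H₁ c₂ c₁ l B x) := by
  refine stab H₁ hH (l + c₁) (by linarith) _ _ hu₁ (by fun_prop) ?_
  intro x₀ ε hε
  obtain ⟨w₁, w₂, hw, hge⟩ := exists_near_per h x₀ ε hε
  refine ⟨w₁, _, hw.cont₁, hw.sub₁, ?_, ?_, hge⟩
  · intro y _
    linarith [le_per hw y]
  · intro y _
    have := le_per hw.swap y
    have : c₁ * w₂ y ≤ c₁ * Per H₂ H₁ c₂ c₁ l B y := by gcongr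
    linarith

lemma per_bd {n : ℕ} {H₁ H₂ : En n → En n → ℝ} 
    {c₁ c₂ l B : ℝ} {w₁ w₂ : En n → ℝ}
    (h : Fam H₁ H₂ c₁ c₂ l B w₁ w₂) (x : En n) : |Per H₁ H₂ c₁ c₂ l B x| ≤ B := by
  rw [abs_le]
  exact ⟨(abs_le.1 (h.bd₁ x)).1.trans (le_per h x),
    per_le h x B fun w₁ w₂ hw => (abs_le.1 (hw.bd₁ x)).2⟩

lemma SubE.mono {n : ℕ} {H : En n → En n → ℝ} {a : ℝ} {w g g' : En n → ℝ} (h : SubE H a w g)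
    (hg : ∀ x, g x ≤ g' x) : SubE H a w g' :=
  fun φ hφ x hx => (h φ hφ x hx).trans (hg x)

lemma per_super {n : ℕ} {H₁ H₂ : En n → En n → ℝ} (hH : Continuous fun q : En n × En n => H₁ q.1 q.2)
    (hH₂ : Continuous fun q : En n × En n => H₂ q.1 q.2)
    {c₁ c₂ l B : ℝ} (hl : 0 ≤ l) (hc₁ : 0 ≤ c₁) (hc₂ : 0 ≤ c₂) {w₁ w₂ : En n → ℝ}
    (h : Fam H₁ H₂ c₁ c₂ l B w₁ w₂) (h0 : ∀ x, -(l * B) ≤ H₁ x 0)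
    (hu₁ : Continuous (Per H₁ H₂ c₁ c₂ l B)) (hu₂ : Continuous (Per H₂ H₁ c₂ c₁ l B)) :
    SuperE H₁ (l + c₁) (Per H₁ H₂ c₁ c₂ l B) (fun x => c₁ * Per H₂ H₁ c₂ c₁ l B x) := by
  intro φ hφ x₀ hmin
  by_contra hcon
  push Not at hcon
  have hle1 := fun x => (abs_le.1 (per_bd h x)).2
  have hle2 := fun x => (abs_le.1 (per_bd h.swap x)).2
  have s1 := per_sub hH hl hc₁ h hu₁ hu₂
  have s2 := per_sub hH₂ hl hc₂ h.swap hu₂ hu₁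
  rcases (hle1 x₀).eq_or_lt with heq | hlt
  · have hmax : IsLocalMax φ x₀ := by
      filter_upwards [hmin] with y hy
      have := hle1 y
      linarith
    have hz : gradient φ x₀ = 0 := by simp [gradient, hmax.fderiv_eq_zero]
    rw [hz, heq] at hcon
    have h1 := h0 x₀
    have : c₁ * Per H₂ H₁ c₂ c₁ l B x₀ ≤ c₁ * B := by gcongr; exact hle2 x₀
    linarith
  · obtain ⟨U, hUc, huU, hUB, hlt', hUs⟩ := bump H₁ hH (l + c₁) (by linarith) _ _ hu₁ (by fun_prop)
      s1 B hle1 φ hφ x₀ hmin hcon hlt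
    have hF : Fam H₁ H₂ c₁ c₂ l B U (Per H₂ H₁ c₂ c₁ l B) := by
      refine ⟨hUc, hu₂, ?_, per_bd h.swap, hUs, s2.mono ?_⟩
      · intro x
        exact abs_le.2 ⟨(abs_le.1 (per_bd h x)).1.trans (huU x), hUB x⟩
      · intro x
        have := huU x
        gcongr
    exact absurd (le_per hF x₀) (not_le.2 hlt')

lemma per_lip {n : ℕ} {H₁ H₂ : En n → En n → ℝ} {c₁ c₂ l B : ℝ} {w₁ w₂ : En n → ℝ}
    (h : Fam H₁ H₂ c₁ c₂ l B w₁ w₂) (K : NNReal)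
    (hK : ∀ w₁ w₂, Fam H₁ H₂ c₁ c₂ l B w₁ w₂ → LipschitzWith K w₁) :
    LipschitzWith K (Per H₁ H₂ c₁ c₂ l B) := by
  apply LipschitzWith.of_le_add_mul
  intro x y
  refine per_le h x _ fun w₁ w₂ hw => ?_
  have h1 := (hK _ _ hw).le_add_mul x y
  have h2 := le_per hw y
  linarith


lemma reduce (n : ℕ) : ∃ B : ℝ, 0 ≤ B ∧ ∀ x : En n, ∃ k : Fin n → ℤ, ‖x + intVec n k‖ ≤ B := by
  refine ⟨√n, Real.sqrt_nonneg _, fun x => ⟨fun i => -⌊x i⌋, ?_⟩⟩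
  rw [EuclideanSpace.norm_eq]
  apply Real.sqrt_le_sqrt
  have : ∀ i ∈ Finset.univ, ‖(x + intVec n fun i => -⌊x i⌋) i‖ ^ 2 ≤ 1 := by
    intro i _
    have h1 := Int.floor_le (x i)
    have h2 := Int.lt_floor_add_one (x i)
    simp only [intVec, PiLp.add_apply, Real.norm_eq_abs, sq_abs]
    push_cast
    nlinarith
  simpa using Finset.sum_le_card_nsmul _ _ _ this

lemma H_zero_bdd {n : ℕ} (H : En n → En n → ℝ) (hH : Continuous fun q : En n × En n => H q.1 q.2)
    (hper : ZPeriodicH H) : ∃ C : ℝ, ∀ x, |H x 0| ≤ C := by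
  obtain ⟨B, hB, hred⟩ := reduce n
  have hc : Continuous fun x : En n => H x 0 := hH.comp (continuous_id.prodMk continuous_const)
  obtain ⟨C, hC⟩ := (isCompact_closedBall (0 : En n) B).exists_bound_of_continuousOn hc.continuousOn
  refine ⟨C, fun x => ?_⟩
  obtain ⟨k, hk⟩ := hred x
  rw [← hper x k]
  exact hC _ (by simpa using hk)

lemma H_bdd_below {n : ℕ} (H : En n → En n → ℝ) (hH : Continuous fun q : En n × En n => H q.1 q.2)
    (hper : ZPeriodicH H) (hco : Coercive H) : ∃ m : ℝ, 0 ≤ m ∧ ∀ x p, -m ≤ H x p := by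
  obtain ⟨B, hB, hred⟩ := reduce n
  obtain ⟨r, hr⟩ := hco 0
  obtain ⟨C, hC⟩ := ((isCompact_closedBall (0 : En n) B).prod
    (isCompact_closedBall (0 : En n) r)).exists_bound_of_continuousOn hH.continuousOn
  refine ⟨max C 0, le_max_right _ _, fun x p => ?_⟩
  obtain ⟨k, hk⟩ := hred x
  rw [← hper x k]
  by_cases hp : r ≤ ‖p‖
  · have := hr (x + intVec n k) p hp
    linarith [le_max_right C 0]
  · have := hC (x + intVec n k, p) ⟨by simpa using hk, by simpa using (not_le.1 hp).le⟩
    have := (abs_le.1 this).1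
    simp only at this
    linarith [le_max_left C 0]

lemma disc {n : ℕ} (H₁ H₂ : En n → En n → ℝ)
    (hH₁cont : Continuous fun q : En n × En n => H₁ q.1 q.2)
    (hH₂cont : Continuous fun q : En n × En n => H₂ q.1 q.2)
    (hH₁per : ZPeriodicH H₁) (hH₂per : ZPeriodicH H₂)
    (hH₁coer : Coercive H₁) (hH₂coer : Coercive H₂)
    (c₁ c₂ : ℝ) (hc₁ : 0 < c₁) (hc₂ : 0 < c₂) :
    ∃ (K : NNReal) (C D : ℝ), ∀ l : ℝ, 0 < l → ∃ u₁ u₂ : En n → ℝ,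
      ZPeriodic u₁ ∧ ZPeriodic u₂ ∧ LipschitzWith K u₁ ∧ LipschitzWith K u₂ ∧
      (∀ x, |l * u₁ x| ≤ C) ∧ (∀ x, |u₂ x - u₁ x| ≤ D) ∧
      SubE H₁ (l + c₁) u₁ (fun x => c₁ * u₂ x) ∧ SubE H₂ (l + c₂) u₂ (fun x => c₂ * u₁ x) ∧
      SuperE H₁ (l + c₁) u₁ (fun x => c₁ * u₂ x) ∧
      SuperE H₂ (l + c₂) u₂ (fun x => c₂ * u₁ x) := by
  obtain ⟨C₁, hC₁⟩ := H_zero_bdd H₁ hH₁cont hH₁per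
  obtain ⟨C₂, hC₂⟩ := H_zero_bdd H₂ hH₂cont hH₂per
  obtain ⟨m₁, hm₁0, hm₁⟩ := H_bdd_below H₁ hH₁cont hH₁per hH₁coer
  obtain ⟨m₂, hm₂0, hm₂⟩ := H_bdd_below H₂ hH₂cont hH₂per hH₂coer
  obtain ⟨C, hC, hC0⟩ : ∃ C, (C₁ ≤ C ∧ C₂ ≤ C) ∧ 0 ≤ C :=
    ⟨max (max C₁ C₂) 0, ⟨(le_max_left _ _).trans (le_max_left _ _),
      (le_max_right _ _).trans (le_max_left _ _)⟩, le_max_right _ _⟩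
  obtain ⟨D, hD1, hD2⟩ : ∃ D, (C + m₁) / c₁ ≤ D ∧ (C + m₂) / c₂ ≤ D :=
    ⟨_, le_max_left _ _, le_max_right _ _⟩
  obtain ⟨r₁, hr₁⟩ := hH₁coer (C + c₁ * D + 1)
  obtain ⟨r₂, hr₂⟩ := hH₂coer (C + c₂ * D + 1)
  obtain ⟨K, hK1, hK2⟩ : ∃ K : NNReal, r₁ ≤ K ∧ r₂ ≤ K :=
    ⟨Real.toNNReal (max r₁ r₂), (le_max_left _ _).trans (Real.le_coe_toNNReal _),
      (le_max_right _ _).trans (Real.le_coe_toNNReal _)⟩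
  refine ⟨K, C, D, fun l hl => ?_⟩
  have hlB : l * (C / l) = C := by field_simp
  have hB0 : 0 ≤ C / l := by positivity
  have h := fam_const H₁ H₂ c₁ c₂ l (C / l) hB0
    (fun x => by rw [hlB]; exact (abs_le.1 (hC₁ x)).2.trans hC.1)
    (fun x => by rw [hlB]; exact (abs_le.1 (hC₂ x)).2.trans hC.2)
  have d1 : ∀ w₁ w₂, Fam H₁ H₂ c₁ c₂ l (C / l) w₁ w₂ → ∀ x, w₁ x - w₂ x ≤ D := by
    intro w₁ w₂ hw x
    have := hw.diff_le hl.le m₁ hm₁ x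
    rw [hlB] at this
    refine le_trans ?_ hD1
    rw [le_div_iff₀ hc₁]; linarith
  have d2 : ∀ w₂ w₁, Fam H₂ H₁ c₂ c₁ l (C / l) w₂ w₁ → ∀ x, w₂ x - w₁ x ≤ D := by
    intro w₁ w₂ hw x
    have := hw.diff_le hl.le m₂ hm₂ x
    rw [hlB] at this
    refine le_trans ?_ hD2
    rw [le_div_iff₀ hc₂]; linarith
  have L1 : LipschitzWith K (Per H₁ H₂ c₁ c₂ l (C / l)) := per_lip h K fun w₁ w₂ hw =>
    hw.lip hl.le D hc₁ (d2 _ _ hw.swap) K (fun x p hp => by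
      rw [hlB]; exact hr₁ x p (hK1.trans hp))
  have L2 : LipschitzWith K (Per H₂ H₁ c₂ c₁ l (C / l)) := per_lip h.swap K fun w₁ w₂ hw =>
    hw.lip hl.le D hc₂ (d1 _ _ hw.swap) K (fun x p hp => by
      rw [hlB]; exact hr₂ x p (hK2.trans hp))
  refine ⟨Per H₁ H₂ c₁ c₂ l (C / l), Per H₂ H₁ c₂ c₁ l (C / l), per_periodic h hH₁per hH₂per,
    per_periodic h.swap hH₂per hH₁per, L1, L2, ?_, ?_,
    per_sub hH₁cont hl.le hc₁.le h L1.continuous L2.continuous,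
    per_sub hH₂cont hl.le hc₂.le h.swap L2.continuous L1.continuous,
    per_super hH₁cont hH₂cont hl.le hc₁.le hc₂.le h (fun x => ?_) L1.continuous L2.continuous,
    per_super hH₂cont hH₁cont hl.le hc₂.le hc₁.le h.swap (fun x => ?_) L2.continuous L1.continuous⟩
  · intro x
    rw [abs_mul, abs_of_pos hl]
    calc _ ≤ l * (C / l) := by gcongr; exact per_bd h x
      _ = C := hlB
  · intro x
    rw [abs_le]
    constructor
    · have : Per H₁ H₂ c₁ c₂ l (C / l) x ≤ Per H₂ H₁ c₂ c₁ l (C / l) x + D :=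
        per_le h x _ fun w₁ w₂ hw => by linarith [d1 _ _ hw x, le_per hw.swap x]
      linarith
    · have : Per H₂ H₁ c₂ c₁ l (C / l) x ≤ Per H₁ H₂ c₁ c₂ l (C / l) x + D :=
        per_le h.swap x _ fun w₁ w₂ hw => by linarith [d2 _ _ hw x, le_per hw.swap x]
      linarith
  · rw [hlB]; linarith [(abs_le.1 (hC₁ x)).1, hC.1]
  · rw [hlB]; linarith [(abs_le.1 (hC₂ x)).1, hC.2]

lemma unif_ball {n : ℕ} (𝒰 : Filter ℕ) (K : NNReal) (f : ℕ → En n → ℝ) (v : En n → ℝ)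
    (hf : ∀ k, LipschitzWith K (f k)) (hv : LipschitzWith K v)
    (h : ∀ x, Tendsto (fun k => f k x) 𝒰 (𝓝 (v x))) (x₀ : En n) (ε : ℝ) (hε : 0 < ε) :
    ∀ᶠ k in 𝒰, ∀ y ∈ Metric.closedBall x₀ 1, |f k y - v y| ≤ ε := by
  let δ := ε / (2 * K + 1)
  have hδ : 0 < δ := by positivity
  have hδe : (2 * K + 1) * δ = ε := by simp only [δ]; field_simp
  obtain ⟨t, -, htf, htc⟩ := (isCompact_closedBall x₀ (1:ℝ)).finite_cover_balls hδ
  have h1 : ∀ᶠ k in 𝒰, ∀ x ∈ t, |f k x - v x| < δ := by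
    rw [eventually_all_finite htf]
    intro x _
    have := (Metric.tendsto_nhds.1 (h x)) δ hδ
    simpa [Real.dist_eq] using this
  filter_upwards [h1] with k hk y hy
  obtain ⟨x, hx, hxy⟩ := mem_iUnion₂.1 (htc hy)
  have a1 := (hf k).dist_le_mul y x
  have a2 := hv.dist_le_mul y x
  have a3 := hk x hx
  rw [Metric.mem_ball] at hxy
  have a4 : K * dist y x ≤ K * δ := by gcongr
  rw [Real.dist_eq] at a1 a2
  have b1 := abs_le.1 (a1.trans a4)
  have b2 := abs_le.1 (a2.trans a4)
  have b3 := abs_lt.1 a3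
  rw [abs_le]
  constructor <;> linarith

lemma lim_sub {n : ℕ} (𝒰 : Filter ℕ) [𝒰.NeBot] (K : NNReal) (H : En n → En n → ℝ)
    (hH : Continuous fun q : En n × En n => H q.1 q.2) (c : ℝ) (hc : 0 ≤ c)
    (F G : ℕ → En n → ℝ) (v g : En n → ℝ) (K' : NNReal)
    (hF : ∀ k, LipschitzWith K (F k)) (hG : ∀ k, LipschitzWith K' (G k))
    (hv : LipschitzWith K v) (hg : LipschitzWith K' g)
    (tF : ∀ x, Tendsto (fun k => F k x) 𝒰 (𝓝 (v x)))
    (tG : ∀ x, Tendsto (fun k => G k x) 𝒰 (𝓝 (g x)))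
    (hs : ∀ k, SubE H c (F k) (G k)) : SubE H c v g := by
  refine stab H hH c hc v g hv.continuous hg.continuous ?_
  intro x₀ ε hε
  obtain ⟨k, h1, h2⟩ := ((unif_ball 𝒰 K F v hF hv tF x₀ ε hε).and
    (unif_ball 𝒰 K' G g hG hg tG x₀ ε hε)).exists
  refine ⟨F k, G k, (hF k).continuous, hs k, fun y hy => ?_, fun y hy => ?_, ?_⟩
  · linarith [(abs_le.1 (h1 y hy)).2]
  · linarith [(abs_le.1 (h2 y hy)).2]
  · linarith [(abs_le.1 (h1 x₀ (Metric.mem_closedBall_self zero_le_one))).1]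

lemma lim_super {n : ℕ} (𝒰 : Filter ℕ) [𝒰.NeBot] (K : NNReal) (H : En n → En n → ℝ)
    (hH : Continuous fun q : En n × En n => H q.1 q.2) (c : ℝ) (hc : 0 ≤ c)
    (F G : ℕ → En n → ℝ) (v g : En n → ℝ) (K' : NNReal)
    (hF : ∀ k, LipschitzWith K (F k)) (hG : ∀ k, LipschitzWith K' (G k))
    (hv : LipschitzWith K v) (hg : LipschitzWith K' g)
    (tF : ∀ x, Tendsto (fun k => F k x) 𝒰 (𝓝 (v x)))
    (tG : ∀ x, Tendsto (fun k => G k x) 𝒰 (𝓝 (g x)))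
    (hs : ∀ k, SuperE H c (F k) (G k)) : SuperE H c v g := by
  rw [superE_iff]
  refine lim_sub 𝒰 K _ ?_ c hc (fun k x => - F k x) (fun k x => - G k x) _ _ K' (fun k => (hF k).neg)
    (fun k => (hG k).neg) hv.neg hg.neg (fun x => (tF x).neg) (fun x => (tG x).neg)
    (fun k => (superE_iff _ _ _ _).1 (hs k))
  exact (hH.comp (continuous_fst.prodMk continuous_snd.neg)).neg

lemma lip_lim {n : ℕ} (𝒰 : Filter ℕ) [𝒰.NeBot] (K : NNReal) (F : ℕ → En n → ℝ) (v : En n → ℝ)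
    (hF : ∀ k, LipschitzWith K (F k))
    (tF : ∀ x, Tendsto (fun k => F k x) 𝒰 (𝓝 (v x))) : LipschitzWith K v := by
  apply LipschitzWith.of_le_add_mul
  intro x y
  exact le_of_tendsto_of_tendsto' (tF x) ((tF y).add_const _) fun k => (hF k).le_add_mul x y

lemma ultra_lim (𝒰 : Ultrafilter ℕ) (s : ℕ → ℝ) (C : ℝ) (h : ∀ k, |s k| ≤ C) :
    ∃ a, Tendsto s 𝒰 (𝓝 a) := by
  have := (isCompact_Icc (a := -C) (b := C)).ultrafilter_le_nhds' (𝒰.map s)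
    (by
      rw [Ultrafilter.mem_map]
      exact univ_mem' fun k => abs_le.1 (h k))
  obtain ⟨a, -, ha⟩ := this
  exact ⟨a, ha⟩

lemma SubE.norm {n : ℕ} {H : En n → En n → ℝ} {l c : ℝ} {w w' : En n → ℝ}
    (h : SubE H (l + c) w (fun x => c * w' x)) (s : ℝ) :
    SubE H c (fun x => w x - s) (fun x => c * (w' x - s) - l * w x) := by
  intro φ hφ x₀ hx
  have := h φ hφ x₀ (by
    filter_upwards [hx] with y hy
    linarith)
  simp only at this ⊢
  linarith

lemma SuperE.norm {n : ℕ} {H : En n → En n → ℝ} {l c : ℝ} {w w' : En n → ℝ}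
    (h : SuperE H (l + c) w (fun x => c * w' x)) (s : ℝ) :
    SuperE H c (fun x => w x - s) (fun x => c * (w' x - s) - l * w x) := by
  intro φ hφ x₀ hx
  have := h φ hφ x₀ (by
    filter_upwards [hx] with y hy
    linarith)
  simp only at this ⊢
  linarith

lemma lip_comb {n : ℕ} {K : NNReal} {w w' : En n → ℝ} (hw : LipschitzWith K w)
    (hw' : LipschitzWith K w') (c : NNReal) (l s : ℝ) (hl : 0 ≤ l) (hl1 : l ≤ 1) :
    LipschitzWith (c * K + K) (fun x => c * (w' x - s) - l * w x) := by
  apply LipschitzWith.of_le_add_mul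
  intro x y
  have h1 := hw'.le_add_mul x y
  have h2 := hw.le_add_mul y x
  rw [dist_comm] at h2
  have h3 : c * w' x ≤ c * (w' y + K * dist x y) := by gcongr
  have h4 : l * w y ≤ l * (w x + K * dist x y) := by gcongr
  have h5 : l * (K * dist x y) ≤ 1 * (K * dist x y) := by gcongr
  push_cast
  linarith

lemma existence {n : ℕ} (H₁ H₂ : En n → En n → ℝ)
    (hH₁cont : Continuous fun q : En n × En n => H₁ q.1 q.2)
    (hH₂cont : Continuous fun q : En n × En n => H₂ q.1 q.2)
    (hH₁per : ZPeriodicH H₁) (hH₂per : ZPeriodicH H₂)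
    (hH₁coer : Coercive H₁) (hH₂coer : Coercive H₂)
    (c₁ c₂ : ℝ) (hc₁ : 0 < c₁) (hc₂ : 0 < c₂) :
    ∃ (v₁ v₂ : En n → ℝ) (Hbar₁ Hbar₂ : ℝ),
      IsLip v₁ ∧ IsLip v₂ ∧ ZPeriodic v₁ ∧ ZPeriodic v₂ ∧
      CellSolution H₁ H₂ c₁ c₂ v₁ v₂ (fun _ => Hbar₁) (fun _ => Hbar₂) := by
  obtain ⟨K, C, D, hdisc⟩ := disc H₁ H₂ hH₁cont hH₂cont hH₁per hH₂per hH₁coer hH₂coer c₁ c₂ hc₁ hc₂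
  let l : ℕ → ℝ := fun k => 1 / ((k : ℝ) + 1)
  have hl0 : ∀ k, 0 < l k := fun k => by positivity
  have hl1 : ∀ k, l k ≤ 1 := fun k => by
    simp only [l]; rw [div_le_one (by positivity)]; linarith [Nat.cast_nonneg (α := ℝ) k]
  choose u₁ u₂ p₁ p₂ L₁ L₂ bC bD s₁ s₂ S₁ S₂ using fun k => hdisc (l k) (hl0 k)
  let 𝒰 : Ultrafilter ℕ := Filter.hyperfilter ℕ
  have h𝒰 : (𝒰 : Filter ℕ) ≤ atTop := by
    rw [← Nat.cofinite_eq_atTop]; exact Filter.hyperfilter_le_cofinite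
  have tl : Tendsto l 𝒰 (𝓝 0) := tendsto_one_div_add_atTop_nhds_zero_nat.mono_left h𝒰
  let F₁ : ℕ → En n → ℝ := fun k x => u₁ k x - u₁ k 0
  let F₂ : ℕ → En n → ℝ := fun k x => u₂ k x - u₁ k 0
  have bF₁ : ∀ k x, |F₁ k x| ≤ K * dist x 0 := fun k x => by
    have := (L₁ k).dist_le_mul x 0
    rwa [Real.dist_eq] at this
  have bF₂ : ∀ k x, |F₂ k x| ≤ D + K * dist x 0 := fun k x => by
    have h1 := bF₁ k x
    have h2 := bD k x
    have : F₂ k x = (u₂ k x - u₁ k x) + F₁ k x := by simp only [F₁, F₂]; ring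
    rw [this]
    exact (abs_add_le _ _).trans (add_le_add h2 h1)
  choose v₁ t₁ using fun x => ultra_lim 𝒰 (fun k => F₁ k x) _ (fun k => bF₁ k x)
  choose v₂ t₂ using fun x => ultra_lim 𝒰 (fun k => F₂ k x) _ (fun k => bF₂ k x)
  obtain ⟨h, th⟩ := ultra_lim 𝒰 (fun k => l k * u₁ k 0) C (fun k => bC k 0)
  have lF₁ : ∀ k, LipschitzWith K (F₁ k) := fun k => by
    apply LipschitzWith.of_le_add_mul
    intro x y
    have := (L₁ k).le_add_mul x y
    simp only [F₁]; linarith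
  have lF₂ : ∀ k, LipschitzWith K (F₂ k) := fun k => by
    apply LipschitzWith.of_le_add_mul
    intro x y
    have := (L₂ k).le_add_mul x y
    simp only [F₂]; linarith
  have lv₁ := lip_lim 𝒰 K F₁ v₁ lF₁ t₁
  have lv₂ := lip_lim 𝒰 K F₂ v₂ lF₂ t₂
  have q₁ : ∀ x, Tendsto (fun k => l k * u₁ k x) 𝒰 (𝓝 h) := fun x => by
    have := th.add (tl.mul (t₁ x))
    rw [zero_mul, add_zero] at this
    exact this.congr fun k => by simp only [F₁]; ring
  have q₂ : ∀ x, Tendsto (fun k => l k * u₂ k x) 𝒰 (𝓝 h) := fun x => by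
    have := th.add (tl.mul (t₂ x))
    rw [zero_mul, add_zero] at this
    exact this.congr fun k => by simp only [F₂]; ring
  let C₁ : NNReal := ⟨c₁, hc₁.le⟩
  let C₂ : NNReal := ⟨c₂, hc₂.le⟩
  let G₁ : ℕ → En n → ℝ := fun k x => c₁ * (u₂ k x - u₁ k 0) - l k * u₁ k x
  let G₂ : ℕ → En n → ℝ := fun k x => c₂ * (u₁ k x - u₁ k 0) - l k * u₂ k x
  have lG₁ : ∀ k, LipschitzWith (C₁ * K + K) (G₁ k) := fun k =>
    lip_comb (L₁ k) (L₂ k) C₁ (l k) (u₁ k 0) (hl0 k).le (hl1 k)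
  have lG₂ : ∀ k, LipschitzWith (C₂ * K + K) (G₂ k) := fun k =>
    lip_comb (L₂ k) (L₁ k) C₂ (l k) (u₁ k 0) (hl0 k).le (hl1 k)
  have tG₁ : ∀ x, Tendsto (fun k => G₁ k x) 𝒰 (𝓝 (c₁ * v₂ x - h)) := fun x =>
    ((t₂ x).const_mul c₁).sub (q₁ x)
  have tG₂ : ∀ x, Tendsto (fun k => G₂ k x) 𝒰 (𝓝 (c₂ * v₁ x - h)) := fun x =>
    ((t₁ x).const_mul c₂).sub (q₂ x)
  have lg₁ := lip_lim 𝒰 _ G₁ _ lG₁ tG₁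
  have lg₂ := lip_lim 𝒰 _ G₂ _ lG₂ tG₂
  have r₁ := lim_sub 𝒰 K H₁ hH₁cont c₁ hc₁.le F₁ G₁ v₁ _ _ lF₁ lG₁ lv₁ lg₁ t₁ tG₁
    (fun k => (s₁ k).norm _)
  have r₂ := lim_sub 𝒰 K H₂ hH₂cont c₂ hc₂.le F₂ G₂ v₂ _ _ lF₂ lG₂ lv₂ lg₂ t₂ tG₂
    (fun k => (s₂ k).norm _)
  have R₁ := lim_super 𝒰 K H₁ hH₁cont c₁ hc₁.le F₁ G₁ v₁ _ _ lF₁ lG₁ lv₁ lg₁ t₁ tG₁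
    (fun k => (S₁ k).norm _)
  have R₂ := lim_super 𝒰 K H₂ hH₂cont c₂ hc₂.le F₂ G₂ v₂ _ _ lF₂ lG₂ lv₂ lg₂ t₂ tG₂
    (fun k => (S₂ k).norm _)
  refine ⟨v₁, v₂, -h, -h, ⟨K, lv₁⟩, ⟨K, lv₂⟩, ?_, ?_, lv₁.continuous, lv₂.continuous,
    ⟨?_, ?_⟩, ⟨?_, ?_⟩⟩
  · intro x k
    refine tendsto_nhds_unique (t₁ (x + intVec n k)) ((t₁ x).congr fun j => ?_)
    simp only [F₁]; rw [p₁ j x k]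
  · intro x k
    refine tendsto_nhds_unique (t₂ (x + intVec n k)) ((t₂ x).congr fun j => ?_)
    simp only [F₂]; rw [p₂ j x k]
  · intro φ hφ x hx
    have := r₁ φ hφ x hx
    simp only at this ⊢; linarith
  · intro φ hφ x hx
    have := r₂ φ hφ x hx
    simp only at this ⊢; linarith
  · intro φ hφ x hx
    have := R₁ φ hφ x hx
    simp only at this ⊢; linarith
  · intro φ hφ x hx
    have := R₂ φ hφ x hx
    simp only at this ⊢; linarith


lemma uniq_key {n : ℕ} (H : En n → En n → ℝ) (hH : Continuous fun q : En n × En n => H q.1 q.2)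
    (c : ℝ) (hc : 0 ≤ c) (v v' w w' : En n → ℝ) (K : NNReal) (hv : Continuous v)
    (hw : LipschitzWith K w) (hw' : LipschitzWith K w') (pv : ZPeriodic v) (pw : ZPeriodic w)
    (h k M M' : ℝ) (hs : StatSubIneq H c v v' (fun _ => h))
    (hS : StatSuperIneq H c w w' (fun _ => k)) (hM : ∃ x, M ≤ v x - w x)
    (hM' : ∀ x, v' x - w' x ≤ M') : k - h ≤ c * (M' - M) := by
  by_contra hcon
  obtain ⟨η, hη⟩ : ∃ η, η = k - h - c * (M' - M) := ⟨_, rfl⟩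
  have hη0 : 0 < η := by rw [hη]; linarith
  obtain ⟨B, hB, hred⟩ := reduce n
  have huc := ((isCompact_closedBall (0 : En n) (B + 1)).prod
    (isCompact_closedBall (0 : En n) (2 * K))).uniformContinuousOn_of_continuous hH.continuousOn
  obtain ⟨δ, hδ, huc⟩ := Metric.uniformContinuousOn_iff.1 huc (η / 2) (by linarith)
  have hcK : 0 ≤ c * K := by positivity
  obtain ⟨τ, hτ, hτδ, hτ1, hτη⟩ : ∃ τ > 0, τ ≤ δ ∧ τ ≤ 1 ∧ c * K * τ ≤ η / 2 := by
    refine ⟨min δ (min 1 (η / (2 * (c * K + 1)))), by positivity, min_le_left _ _,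
      (min_le_right _ _).trans (min_le_left _ _), ?_⟩
    calc _ ≤ c * K * (η / (2 * (c * K + 1))) := by
          gcongr; exact (min_le_right _ _).trans (min_le_right _ _)
      _ ≤ (c * K + 1) * (η / (2 * (c * K + 1))) := by gcongr; linarith
      _ = η / 2 := by field_simp
  obtain ⟨A, hA⟩ : ∃ A : ℝ, A = (K + 1) / τ := ⟨_, rfl⟩
  have hAτ : A * τ = K + 1 := by rw [hA]; field_simp
  have hA0 : 0 < A := by rw [hA]; positivity
  have hAK : (K : ℝ) ≤ A := by nlinarith
  obtain ⟨G, hG⟩ : ∃ G : En n → En n → ℝ, G = fun x z => v x - w (x - z) - A * ‖z‖ ^ 2 := ⟨_, rfl⟩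
  have hGc : Continuous fun q : En n × En n => G q.1 q.2 := by
    have := hw.continuous
    rw [hG]; fun_prop
  obtain ⟨⟨x₁, z₁⟩, hq, hmax⟩ := ((isCompact_closedBall (0 : En n) B).prod
    (isCompact_closedBall (0 : En n) 1)).exists_isMaxOn
    ⟨(0, 0), by simpa using hB, by simp⟩ hGc.continuousOn
  have hwK : ∀ x z, w x - w (x - z) ≤ K * ‖z‖ := fun x z => by
    have := hw.le_add_mul x (x - z)
    rw [dist_eq_norm, sub_sub_cancel] at this
    linarith
  have hle : ∀ x z, G x z ≤ G x₁ z₁ := by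
    have h1 : ∀ x z, ‖z‖ ≤ 1 → G x z ≤ G x₁ z₁ := by
      intro x z hz
      obtain ⟨j, hj⟩ := hred x
      have : G x z = G (x + intVec n j) z := by
        simp only [hG]
        rw [pv, add_sub_right_comm, pw]
      rw [this]
      exact hmax (a := (x + intVec n j, z)) ⟨by simpa using hj, by simpa using hz⟩
    intro x z
    by_cases hz : ‖z‖ ≤ 1
    · exact h1 x z hz
    · refine le_trans ?_ (h1 x 0 (by simp))
      have := hwK x z
      simp only [hG]
      simp only [sub_zero, norm_zero]
      have h2 : K * ‖z‖ ≤ A * ‖z‖ ^ 2 := by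
        have : ‖z‖ ≤ ‖z‖ ^ 2 := by nlinarith
        calc _ ≤ A * ‖z‖ := by gcongr
          _ ≤ _ := by gcongr
      linarith
  have hz : A * ‖z₁‖ ≤ K := by
    have h1 := hle x₁ 0
    have h2 := hwK x₁ z₁
    simp only [hG, sub_zero, norm_zero] at h1
    rcases (norm_nonneg z₁).eq_or_lt with h0 | h0
    · rw [← h0]; simp
    · refine le_of_mul_le_mul_right ?_ h0
      linarith
  have hzτ : ‖z₁‖ < τ := by
    refine lt_of_mul_lt_mul_left ?_ hA0.le
    linarith
  obtain ⟨y₁, hy₁⟩ : ∃ y, y = x₁ - z₁ := ⟨_, rfl⟩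
  have hxy : x₁ - y₁ = z₁ := by rw [hy₁]; abel
  obtain ⟨p, hp⟩ : ∃ p, p = (2 * A) • z₁ := ⟨_, rfl⟩
  have hpn : ‖p‖ ≤ 2 * K := by
    rw [hp, norm_smul, Real.norm_eq_abs, abs_of_pos (by linarith)]; linarith
  have s1 := hs _ (quad_contDiff A y₁) x₁ (Eventually.of_forall fun x => by
    have := hle x (x - y₁)
    simp only [hG, sub_sub_cancel] at this
    beta_reduce; rw [hxy]
    rw [← hy₁] at this
    linarith)
  rw [(quad_grad A y₁ x₁).gradient, hxy, ← hp] at s1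
  have s2 := hS _ (quad_contDiff (-A) x₁) y₁ (Eventually.of_forall fun y => by
    have := hle x₁ (x₁ - y)
    simp only [hG, sub_sub_cancel] at this
    beta_reduce; rw [norm_sub_rev y₁, norm_sub_rev y, hxy]
    rw [← hy₁] at this
    linarith)
  have hgr : (2 * -A) • (y₁ - x₁) = p := by
    rw [hp, ← hxy, ← neg_sub x₁ y₁, smul_neg, mul_neg, neg_smul, neg_neg]
  rw [(quad_grad (-A) x₁ y₁).gradient, hgr] at s2
  have hx₁ : ‖x₁‖ ≤ B := by simpa using hq.1
  have hy₁n : ‖y₁‖ ≤ B + 1 := by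
    rw [hy₁]; exact (norm_sub_le _ _).trans (by linarith)
  have hd := huc (x₁, p) ⟨by simpa using hx₁.trans (by linarith), by simpa using hpn⟩
    (y₁, p) ⟨by simpa using hy₁n, by simpa using hpn⟩ (by
      rw [Prod.dist_eq, dist_self, dist_eq_norm, hxy]
      exact max_lt (hzτ.trans_le hτδ) hδ)
  rw [Real.dist_eq] at hd
  have hd := abs_lt.1 hd
  obtain ⟨x₂, hx₂⟩ := hM
  have h3 : M ≤ v x₁ - w y₁ := by
    have := hle x₂ 0
    simp only [hG, sub_zero, norm_zero] at this
    rw [← hy₁] at this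
    have : 0 ≤ A * ‖z₁‖ ^ 2 := by positivity
    linarith
  have h4 : v' x₁ - w' y₁ ≤ M' + K * τ := by
    have h5 := hM' x₁
    have h6 := hw'.le_add_mul x₁ y₁
    rw [dist_eq_norm, hxy] at h6
    have : K * ‖z₁‖ ≤ K * τ := by gcongr
    linarith
  have h7 : c * ((v' x₁ - w' y₁) - (v x₁ - w y₁)) ≤ c * ((M' + K * τ) - M) := by gcongr
  beta_reduce at s1 s2 hd
  linarith

lemma per_max {n : ℕ} (f : En n → ℝ) (hf : Continuous f) (hp : ZPeriodic f) :
    ∃ x, ∀ y, f y ≤ f x := by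
  obtain ⟨B, hB, hred⟩ := reduce n
  obtain ⟨x, -, hmax⟩ := (isCompact_closedBall (0 : En n) B).exists_isMaxOn
    ⟨0, by simpa using hB⟩ hf.continuousOn
  refine ⟨x, fun y => ?_⟩
  obtain ⟨k, hk⟩ := hred y
  rw [← hp y k]
  exact hmax (by simpa using hk)

lemma uniq_le {n : ℕ} (H₁ H₂ : En n → En n → ℝ)
    (hH₁cont : Continuous fun q : En n × En n => H₁ q.1 q.2)
    (hH₂cont : Continuous fun q : En n × En n => H₂ q.1 q.2)
    (c₁ c₂ : ℝ) (hc₁ : 0 < c₁) (hc₂ : 0 < c₂)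
    (v₁ v₂ w₁ w₂ : En n → ℝ) (h₁ h₂ k₁ k₂ : ℝ)
    (lw₁ : IsLip w₁) (lw₂ : IsLip w₂) (pv₁ : ZPeriodic v₁) (pv₂ : ZPeriodic v₂)
    (pw₁ : ZPeriodic w₁) (pw₂ : ZPeriodic w₂)
    (hv : CellSolution H₁ H₂ c₁ c₂ v₁ v₂ (fun _ => h₁) (fun _ => h₂))
    (hw : CellSolution H₁ H₂ c₁ c₂ w₁ w₂ (fun _ => k₁) (fun _ => k₂)) :
    c₂ * k₁ + c₁ * k₂ ≤ c₂ * h₁ + c₁ * h₂ := by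
  obtain ⟨cv₁, cv₂, ⟨a₁, a₂⟩, -⟩ := hv
  obtain ⟨cw₁, cw₂, -, ⟨b₁, b₂⟩⟩ := hw
  obtain ⟨K₁, lw₁⟩ := lw₁
  obtain ⟨K₂, lw₂⟩ := lw₂
  have lw₁ := lw₁.weaken (le_max_left K₁ K₂)
  have lw₂ := lw₂.weaken (le_max_right K₁ K₂)
  obtain ⟨x₁, hx₁⟩ := per_max (fun x => v₁ x - w₁ x) (cv₁.sub cw₁) (fun x k => by beta_reduce; rw [pv₁, pw₁])
  obtain ⟨x₂, hx₂⟩ := per_max (fun x => v₂ x - w₂ x) (cv₂.sub cw₂) (fun x k => by beta_reduce; rw [pv₂, pw₂])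
  have e₁ := uniq_key H₁ hH₁cont c₁ hc₁.le v₁ v₂ w₁ w₂ _ cv₁ lw₁ lw₂ pv₁ pw₁ h₁ k₁ _ _ a₁ b₁
    ⟨x₁, le_rfl⟩ hx₂
  have e₂ := uniq_key H₂ hH₂cont c₂ hc₂.le v₂ v₁ w₂ w₁ _ cv₂ lw₂ lw₁ pv₂ pw₂ h₂ k₂ _ _ a₂ b₂
    ⟨x₂, le_rfl⟩ hx₁
  have f₁ := mul_le_mul_of_nonneg_left e₁ hc₂.le
  have f₂ := mul_le_mul_of_nonneg_left e₂ hc₁.le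
  beta_reduce at f₁ f₂
  linarith


end Helpers

/-- Existence of a solution of the cell (ergodic) system and uniqueness of
`c₂ H̄₁ + c₁ H̄₂`. -/
theorem stmt0 (n : ℕ) (hn : 1 ≤ n) (H₁ H₂ : En n → En n → ℝ)
    (hH₁cont : Continuous fun q : En n × En n => H₁ q.1 q.2)
    (hH₂cont : Continuous fun q : En n × En n => H₂ q.1 q.2)
    (hH₁per : ZPeriodicH H₁) (hH₂per : ZPeriodicH H₂)
    (hH₁coer : Coercive H₁) (hH₂coer : Coercive H₂)
    (c₁ c₂ : ℝ) (hc₁ : 0 < c₁) (hc₂ : 0 < c₂) :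
    ∃ (v₁ v₂ : En n → ℝ) (Hbar₁ Hbar₂ : ℝ),
      IsLip v₁ ∧ IsLip v₂ ∧ ZPeriodic v₁ ∧ ZPeriodic v₂ ∧
      CellSolution H₁ H₂ c₁ c₂ v₁ v₂ (fun _ => Hbar₁) (fun _ => Hbar₂) ∧
      ∀ (w₁ w₂ : En n → ℝ) (Kbar₁ Kbar₂ : ℝ),
        IsLip w₁ → IsLip w₂ → ZPeriodic w₁ → ZPeriodic w₂ →
        CellSolution H₁ H₂ c₁ c₂ w₁ w₂ (fun _ => Kbar₁) (fun _ => Kbar₂) →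
        c₂ * Hbar₁ + c₁ * Hbar₂ = c₂ * Kbar₁ + c₁ * Kbar₂ := by
  obtain ⟨v₁, v₂, h₁, h₂, lv₁, lv₂, pv₁, pv₂, hv⟩ := existence H₁ H₂ hH₁cont hH₂cont hH₁per hH₂per
    hH₁coer hH₂coer c₁ c₂ hc₁ hc₂
  refine ⟨v₁, v₂, h₁, h₂, lv₁, lv₂, pv₁, pv₂, hv, ?_⟩
  intro w₁ w₂ k₁ k₂ lw₁ lw₂ pw₁ pw₂ hw
  exact le_antisymm
    (uniq_le H₁ H₂ hH₁cont hH₂cont c₁ c₂ hc₁ hc₂ w₁ w₂ v₁ v₂ k₁ k₂ h₁ h₂ lv₁ lv₂ pw₁ pw₂ pv₁ pv₂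
      hw hv)
    (uniq_le H₁ H₂ hH₁cont hH₂cont c₁ c₂ hc₁ hc₂ v₁ v₂ w₁ w₂ h₁ h₂ k₁ k₂ lw₁ lw₂ pv₁ pv₂ pw₁ pw₂
      hv hw)
end

section
/- Let H₁, H₂ : 𝕋^n × ℝ^n → ℝ be continuous and satisfy (A1). Let (u₁, u₂) be a pair of upper semicontinuous functions on 𝕋^n × [0,∞) that is a viscosity subsolution of (C), and let (v₁, v₂) be a pair of lower semicontinuous functions on 𝕋^n × [0,∞) that is a viscosity supersolution of (C). If u_i(·,0) ≤ v_i(·,0) on 𝕋^n for i = 1,2, then u_i ≤ v_i on 𝕋^n × [0,∞) for i = 1,2. -/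
open MeasureTheory Filter Topology Set

section Helpers

noncomputable def tstF {n : ℕ} (α β a l τ : ℝ) (y : En n) (s : ℝ) (q : En n × ℝ) : ℝ :=
  α * ‖q.1 - y‖ ^ 2 + β * (q.2 - s) ^ 2 + a * Real.exp (l * (q.2 - τ))

lemma tstF_contDiff {n : ℕ} (α β a l τ : ℝ) (y : En n) (s : ℝ) :
    ContDiff ℝ 1 (tstF α β a l τ y s) := by
  unfold tstF
  have h : ContDiff ℝ 1 (fun q : En n × ℝ => ‖q.1 - y‖ ^ 2) :=
    (contDiff_fst.sub contDiff_const).norm_sq ℝ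
  fun_prop

lemma tstF_fderiv {n : ℕ} (α β a l τ : ℝ) (y : En n) (s : ℝ) (x : En n) (t : ℝ) :
    fderiv ℝ (tstF α β a l τ y s) (x, t) (0, 1)
      = 2 * β * (t - s) + a * l * Real.exp (l * (t - τ)) := by
  have hd : DifferentiableAt ℝ (tstF α β a l τ y s) (x, t) :=
    (tstF_contDiff α β a l τ y s).differentiable (by norm_num) _
  have h1 : HasDerivAt (fun r : ℝ => ((x, r) : En n × ℝ)) (0, 1) t :=
    (hasDerivAt_const t x).prodMk (hasDerivAt_id t)
  have h2 := hd.hasFDerivAt.comp_hasDerivAt t h1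
  have h3 : HasDerivAt (tstF α β a l τ y s ∘ fun r : ℝ => ((x, r) : En n × ℝ))
      (2 * β * (t - s) + a * l * Real.exp (l * (t - τ))) t := by
    have e1 : HasDerivAt (fun r : ℝ => β * (r - s) ^ 2) (β * (((2 : ℕ) : ℝ) * (t - s) ^ (2 - 1) * 1)) t :=
      (((hasDerivAt_id t).sub_const s).pow 2).const_mul β
    have e2 : HasDerivAt (fun r : ℝ => a * Real.exp (l * (r - τ)))
        (a * (Real.exp (l * (t - τ)) * (l * 1))) t :=
      ((((hasDerivAt_id t).sub_const τ).const_mul l).exp).const_mul a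
    have e3 := ((hasDerivAt_const t (α * ‖x - y‖ ^ 2)).add e1).add e2
    convert! e3 using 1
    push_cast; ring
  exact h2.unique h3

lemma tstF_gradient {n : ℕ} (α β a l τ : ℝ) (y : En n) (s : ℝ) (x : En n) (t : ℝ) :
    gradient (fun z => tstF α β a l τ y s (z, t)) x = (2 * α) • (x - y) := by
  apply HasGradientAt.gradient
  rw [hasGradientAt_iff_hasFDerivAt]
  have e1 : HasFDerivAt (fun z : En n => z - y) (ContinuousLinearMap.id ℝ (En n)) x :=
    (hasFDerivAt_id x).sub_const y
  have e2 := ((e1.norm_sq.const_mul α).add_const (β * (t - s) ^ 2)).add_const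
    (a * Real.exp (l * (t - τ)))
  convert! e2 using 1
  ext z
  simp [inner_smul_left]
  ring

lemma cell_cover {n : ℕ} (x : En n) : ∃ k : Fin n → ℤ, ‖x + intVec n k‖ ≤ (n : ℝ) + 1 := by
  refine ⟨fun i => -⌊x i⌋, ?_⟩
  rw [EuclideanSpace.norm_eq]
  have h : ∑ i, ‖(x + intVec n fun i => -⌊x i⌋) i‖ ^ 2 ≤ ∑ i : Fin n, (1 : ℝ) := by
    refine Finset.sum_le_sum fun i _ => ?_
    have : (x + intVec n fun i => -⌊x i⌋) i = Int.fract (x i) := by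
      simp only [intVec, PiLp.add_apply]; push_cast; rw [← Int.self_sub_floor]; ring
    rw [this, Real.norm_eq_abs, sq_abs]
    have h0 := Int.fract_nonneg (x i)
    have h1 := Int.fract_lt_one (x i)
    nlinarith
  simp only [Finset.sum_const, Finset.card_univ, Fintype.card_fin, nsmul_eq_mul, mul_one] at h
  apply Real.sqrt_le_iff.2
  have : (0 : ℝ) ≤ n := Nat.cast_nonneg n
  constructor
  · positivity
  · nlinarith

lemma usc_bound {n : ℕ} (u : En n × ℝ → ℝ) (hu : UpperSemicontinuous u) (hp : ZPeriodicST u)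
    (T : ℝ) : ∃ M : ℝ, ∀ x t, 0 ≤ t → t ≤ T → u (x, t) ≤ M := by
  by_cases hT : 0 ≤ T
  · have hK : IsCompact (Metric.closedBall (0 : En n) (n + 1) ×ˢ Icc (0 : ℝ) T) :=
      (isCompact_closedBall _ _).prod isCompact_Icc
    have hne : (Metric.closedBall (0 : En n) (n + 1) ×ˢ Icc (0 : ℝ) T).Nonempty :=
      ⟨(0, 0), by simp; exact ⟨by positivity, hT⟩⟩
    obtain ⟨z, hz, hmax⟩ := (hu.upperSemicontinuousOn _).exists_isMaxOn hne hK
    refine ⟨u z, fun x t h0 h1 => ?_⟩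
    obtain ⟨k, hk⟩ := cell_cover x
    rw [← hp x k t]
    exact hmax ⟨by simpa using hk, h0, h1⟩
  · exact ⟨0, fun x t h0 h1 => absurd (h0.trans h1) hT⟩

/-- the doubled function -/
noncomputable def Psi {n : ℕ} (u v : Bool → En n × ℝ → ℝ) (α β a l τ : ℝ) (i : Bool)
    (z : (En n × ℝ) × (En n × ℝ)) : ℝ :=
  u i z.1 - v i z.2 - α * ‖z.1.1 - z.2.1‖ ^ 2 - β * (z.1.2 - z.2.2) ^ 2
    - a * Real.exp (l * (z.1.2 - τ)) - a * Real.exp (l * (z.2.2 - τ))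

lemma diff_usc {n : ℕ} (u v : En n × ℝ → ℝ) (hu : UpperSemicontinuous u)
    (hv : LowerSemicontinuous v) :
    UpperSemicontinuous (fun z : (En n × ℝ) × (En n × ℝ) => u z.1 - v z.2) := by
  have h1 : UpperSemicontinuous (fun z : (En n × ℝ) × (En n × ℝ) => u z.1) :=
    hu.comp continuous_fst
  have h2 : UpperSemicontinuous (fun z : (En n × ℝ) × (En n × ℝ) => - v z.2) :=
    continuous_neg.comp_lowerSemicontinuous_antitone (hv.comp continuous_snd)
      (fun a b h => neg_le_neg h)
  simpa [sub_eq_add_neg] using h1.add h2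

lemma Psi_usc {n : ℕ} (u v : Bool → En n × ℝ → ℝ) (hu : ∀ i, UpperSemicontinuous (u i))
    (hv : ∀ i, LowerSemicontinuous (v i)) (α β a l τ : ℝ) (i : Bool) :
    UpperSemicontinuous (Psi u v α β a l τ i) := by
  have hc : Continuous (fun z : (En n × ℝ) × (En n × ℝ) =>
      - (α * ‖z.1.1 - z.2.1‖ ^ 2) - β * (z.1.2 - z.2.2) ^ 2
    - a * Real.exp (l * (z.1.2 - τ)) - a * Real.exp (l * (z.2.2 - τ))) := by fun_prop
  have := (diff_usc (u i) (v i) (hu i) (hv i)).add hc.upperSemicontinuous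
  have e : Psi u v α β a l τ i = (fun z : (En n × ℝ) × (En n × ℝ) => (u i z.1 - v i z.2) + (- (α * ‖z.1.1 - z.2.1‖ ^ 2) - β * (z.1.2 - z.2.2) ^ 2
    - a * Real.exp (l * (z.1.2 - τ)) - a * Real.exp (l * (z.2.2 - τ)))) := by
    funext z
    simp only [Psi]; ring
  rw [e]; exact this

lemma Psi_max {n : ℕ} (u v : Bool → En n × ℝ → ℝ) (hu : ∀ i, UpperSemicontinuous (u i))
    (hv : ∀ i, LowerSemicontinuous (v i)) (hup : ∀ i, ZPeriodicST (u i))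
    (hvp : ∀ i, ZPeriodicST (v i)) (α β a l τ T M : ℝ) (hT : 0 ≤ T)
    (hβ : 0 ≤ β) (ha : 0 ≤ a) (hα : 2 * M < α) (hα0 : 0 ≤ α)
    (huM : ∀ i x t, 0 ≤ t → t ≤ T → u i (x, t) ≤ M)
    (hvM : ∀ i x t, 0 ≤ t → t ≤ T → -M ≤ v i (x, t))
    (hpos : ∃ i x t y s, 0 ≤ t ∧ t ≤ T ∧ 0 ≤ s ∧ s ≤ T ∧
      0 < Psi u v α β a l τ i ((x, t), (y, s))) :
    ∃ i x t y s, ‖x‖ ≤ (n : ℝ) + 2 ∧ ‖y‖ ≤ (n : ℝ) + 2 ∧ 0 ≤ t ∧ t ≤ T ∧ 0 ≤ s ∧ s ≤ T ∧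
      ∀ j x' t' y' s', 0 ≤ t' → t' ≤ T → 0 ≤ s' → s' ≤ T →
        Psi u v α β a l τ j ((x', t'), (y', s')) ≤ Psi u v α β a l τ i ((x, t), (y, s)) := by
  set Q : Set (En n × ℝ) := Metric.closedBall (0 : En n) (n + 2) ×ˢ Icc (0 : ℝ) T with hQ
  have hQc : IsCompact Q := (isCompact_closedBall _ _).prod isCompact_Icc
  have hQn : Q.Nonempty := ⟨(0, 0), by simp [hQ]; exact ⟨by positivity, hT⟩⟩
  have hex : ∀ i, ∃ z ∈ Q ×ˢ Q, IsMaxOn (Psi u v α β a l τ i) (Q ×ˢ Q) z := fun i =>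
    ((Psi_usc u v hu hv α β a l τ i).upperSemicontinuousOn _).exists_isMaxOn
      (hQn.prod hQn) (hQc.prod hQc)
  have hex2 : ∃ i, ∃ z ∈ Q ×ˢ Q, ∀ j, ∀ z' ∈ Q ×ˢ Q,
      Psi u v α β a l τ j z' ≤ Psi u v α β a l τ i z := by
    choose z hz hm using hex
    obtain ⟨i, hi⟩ := Finite.exists_max (fun i => Psi u v α β a l τ i (z i))
    exact ⟨i, z i, hz i, fun j z' hz' => (hm j hz').trans (hi j)⟩
  obtain ⟨i, ⟨⟨x, t⟩, ⟨y, s⟩⟩, hz, hmax⟩ := hex2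
  simp only [hQ, mem_prod, mem_closedBall_zero_iff, mem_Icc] at hz
  -- every point is either dominated or nonpositive
  have key : ∀ j x' t' y' s', 0 ≤ t' → t' ≤ T → 0 ≤ s' → s' ≤ T →
      Psi u v α β a l τ j ((x', t'), (y', s')) ≤ 0 ∨
      Psi u v α β a l τ j ((x', t'), (y', s')) ≤ Psi u v α β a l τ i ((x, t), (y, s)) := by
    intro j x' t' y' s' h1 h2 h3 h4
    by_cases hd : ‖x' - y'‖ ≤ 1
    · right
      obtain ⟨k, hk⟩ := cell_cover x'
      have := hmax j ((x' + intVec n k, t'), (y' + intVec n k, s')) (by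
        simp only [hQ, mem_prod, mem_closedBall_zero_iff, mem_Icc]
        refine ⟨⟨by linarith, h1, h2⟩, ⟨?_, h3, h4⟩⟩
        have e : y' + intVec n k = (x' + intVec n k) - (x' - y') := by abel
        rw [e]
        refine (norm_sub_le _ _).trans (by linarith))
      refine le_trans (le_of_eq ?_) this
      simp only [Psi]
      rw [hup j, hvp j, add_sub_add_right_eq_sub]
    · left
      push Not at hd
      have a1 := huM j x' t' h1 h2
      have a2 := hvM j y' s' h3 h4
      have a3 : α ≤ α * ‖x' - y'‖ ^ 2 := le_mul_of_one_le_right hα0 (one_le_pow₀ hd.le)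
      have a4 : 0 ≤ β * (t' - s') ^ 2 := by positivity
      have a5 : 0 ≤ a * Real.exp (l * (t' - τ)) := by positivity
      have a6 : 0 ≤ a * Real.exp (l * (s' - τ)) := by positivity
      simp only [Psi]
      linarith
  have hp : 0 < Psi u v α β a l τ i ((x, t), (y, s)) := by
    obtain ⟨j, x', t', y', s', h1, h2, h3, h4, h5⟩ := hpos
    rcases key j x' t' y' s' h1 h2 h3 h4 with h | h <;> linarith
  refine ⟨i, x, t, y, s, hz.1.1, hz.2.1, hz.1.2.1, hz.1.2.2, hz.2.2.1, hz.2.2.2, ?_⟩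
  intro j x' t' y' s' h1 h2 h3 h4
  rcases key j x' t' y' s' h1 h2 h3 h4 with h | h <;> linarith

/-- separation from initial time -/
lemma init_sep {n : ℕ} (u v : En n × ℝ → ℝ) (hu : UpperSemicontinuous u)
    (hv : LowerSemicontinuous v) (T σ : ℝ) (hσ : 0 < σ)
    (hinit : ∀ x, u (x, 0) ≤ v (x, 0)) :
    ∃ ρ : ℝ, 0 < ρ ∧ ∀ x t y s, ‖x‖ ≤ (n : ℝ) + 2 → ‖y‖ ≤ (n : ℝ) + 2 → 0 ≤ t → t ≤ T →
      0 ≤ s → s ≤ T → σ ≤ u (x, t) - v (y, s) → ρ ≤ t + s + ‖x - y‖ := by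
  set Q : Set (En n × ℝ) := Metric.closedBall (0 : En n) (n + 2) ×ˢ Icc (0 : ℝ) T with hQ
  have hQc : IsCompact Q := (isCompact_closedBall _ _).prod isCompact_Icc
  set F := (Q ×ˢ Q) ∩ (fun z : (En n × ℝ) × (En n × ℝ) => u z.1 - v z.2) ⁻¹' Ici σ with hF
  have hFc : IsCompact F :=
    (hQc.prod hQc).inter_right ((diff_usc u v hu hv).isClosed_preimage σ)
  have memF : ∀ x t y s, ‖x‖ ≤ (n : ℝ) + 2 → ‖y‖ ≤ (n : ℝ) + 2 → 0 ≤ t → t ≤ T →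
      0 ≤ s → s ≤ T → σ ≤ u (x, t) - v (y, s) → ((x, t), (y, s)) ∈ F := by
    intro x t y s h1 h2 h3 h4 h5 h6 h7
    refine ⟨?_, h7⟩
    simp only [hQ, mem_prod, mem_closedBall_zero_iff, mem_Icc]
    exact ⟨⟨h1, h3, h4⟩, ⟨h2, h5, h6⟩⟩
  rcases F.eq_empty_or_nonempty with he | hne
  · refine ⟨1, one_pos, fun x t y s h1 h2 h3 h4 h5 h6 h7 => ?_⟩
    have := memF x t y s h1 h2 h3 h4 h5 h6 h7
    rw [he] at this
    exact absurd this (notMem_empty _)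
  · have hc : Continuous (fun z : (En n × ℝ) × (En n × ℝ) =>
      z.1.2 + z.2.2 + ‖z.1.1 - z.2.1‖) := by fun_prop
    obtain ⟨⟨⟨x, t⟩, ⟨y, s⟩⟩, hz, hmin⟩ := hFc.exists_isMinOn hne hc.continuousOn
    refine ⟨t + s + ‖x - y‖, ?_, fun x' t' y' s' h1 h2 h3 h4 h5 h6 h7 =>
      hmin (memF x' t' y' s' h1 h2 h3 h4 h5 h6 h7)⟩
    by_contra hcon
    have hz1 := hz.1
    have hz2 : σ ≤ u (x, t) - v (y, s) := hz.2
    simp only [hQ, mem_prod, mem_closedBall_zero_iff, mem_Icc] at hz1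
    have n0 := norm_nonneg (x - y)
    have ht : t = 0 := by linarith [hz1.1.2.1, hz1.2.2.1]
    have hs : s = 0 := by linarith [hz1.1.2.1, hz1.2.2.1]
    have hxy : ‖x - y‖ = 0 := by linarith
    have hxy' : x = y := sub_eq_zero.1 (norm_eq_zero.1 hxy)
    subst hxy' ht
    rw [hs] at hz2
    linarith [hinit x]

lemma H_unif {n : ℕ} (H : En n → En n → ℝ) (hH : Continuous fun q : En n × En n => H q.1 q.2)
    (r R c : ℝ) (hc : 0 < c) : ∃ ρ : ℝ, 0 < ρ ∧ ∀ x y p : En n, ‖x‖ ≤ r → ‖y‖ ≤ r → ‖p‖ ≤ R →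
      ‖x - y‖ < ρ → H y p - H x p < c := by
  have hK : IsCompact (Metric.closedBall (0 : En n) r ×ˢ Metric.closedBall (0 : En n) R) :=
    (isCompact_closedBall _ _).prod (isCompact_closedBall _ _)
  have h := hK.uniformContinuousOn_of_continuous hH.continuousOn
  obtain ⟨ρ, hρ, h⟩ := Metric.uniformContinuousOn_iff.1 h c hc
  refine ⟨ρ, hρ, fun x y p hx hy hp hd => ?_⟩
  have := h (x, p) (by simp [hx, hp]) (y, p) (by simp [hy, hp])
    (by simp [Prod.dist_eq, dist_eq_norm, hd, hρ])
  rw [Real.dist_eq] at this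
  have := (abs_lt.1 this).1
  simp only at this
  linarith

lemma small_of {A M ρ d : ℝ} (hρ : 0 < ρ) (hA : (8 * M + 4) / ρ ^ 2 ≤ A) (hd0 : 0 ≤ d)
    (hM : 0 < M) (h : A * d ^ 2 ≤ 2 * M) : d < ρ / 2 := by
  by_contra hc
  push Not at hc
  have h1 : 8 * M + 4 ≤ A * ρ ^ 2 := (div_le_iff₀ (by positivity)).1 hA
  have hA0 : 0 ≤ A := le_trans (by positivity) hA
  have h2 : (ρ / 2) ^ 2 ≤ d ^ 2 := by gcongr
  have h3 : A * (ρ / 2) ^ 2 ≤ A * d ^ 2 := by gcongr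
  nlinarith

set_option maxHeartbeats 1000000 in
lemma core_s1 {n : ℕ} (H : Bool → En n → En n → ℝ)
    (hH : ∀ i, Continuous fun q : En n × En n => H i q.1 q.2)
    (hco : ∀ i, Coercive (H i)) (u v : Bool → En n × ℝ → ℝ)
    (hup : ∀ i, ZPeriodicST (u i)) (hvp : ∀ i, ZPeriodicST (v i))
    (hu : ∀ i, UpperSemicontinuous (u i)) (hv : ∀ i, LowerSemicontinuous (v i))
    (hsub : ∀ i, EvolSubIneq (H i) (u i) (u (!i)))
    (hsup : ∀ i, EvolSuperIneq (H i) (v i) (v (!i)))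
    (hinit : ∀ i x, u i (x, 0) ≤ v i (x, 0)) (i₀ : Bool) (x₀ : En n) (t₀ : ℝ) (ht₀ : 0 ≤ t₀) :
    u i₀ (x₀, t₀) ≤ v i₀ (x₀, t₀) := by
  by_contra hcon
  push Not at hcon
  set σ := u i₀ (x₀, t₀) - v i₀ (x₀, t₀) with hσd
  have hσ : 0 < σ := by rw [hσd]; linarith
  set T := t₀ + 1 with hTd
  -- bounds
  obtain ⟨M, hM0, huM, hvM⟩ : ∃ M : ℝ, 0 < M ∧ (∀ i x t, 0 ≤ t → t ≤ T → u i (x, t) ≤ M) ∧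
      (∀ i x t, 0 ≤ t → t ≤ T → -M ≤ v i (x, t)) := by
    choose A hA using fun i => usc_bound (u i) (hu i) (hup i) T
    have hv' : ∀ i, UpperSemicontinuous (fun q => - v i q) := fun i =>
      continuous_neg.comp_lowerSemicontinuous_antitone (hv i) (fun a b h => neg_le_neg h)
    choose B hB using fun i => usc_bound (fun q => - v i q) (hv' i)
      (fun x k t => by simp only [hvp i x k t]) T
    refine ⟨|A true| + |A false| + |B true| + |B false| + 1, by positivity, ?_, ?_⟩
    · intro i x t h1 h2
      have := hA i x t h1 h2
      have a1 := le_abs_self (A true)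
      have a2 := le_abs_self (A false)
      have := abs_nonneg (A true); have := abs_nonneg (A false)
      have := abs_nonneg (B true); have := abs_nonneg (B false)
      cases i <;> linarith
    · intro i x t h1 h2
      have := hB i x t h1 h2
      have a1 := le_abs_self (B true)
      have a2 := le_abs_self (B false)
      have := abs_nonneg (A true); have := abs_nonneg (A false)
      have := abs_nonneg (B true); have := abs_nonneg (B false)
      cases i <;> linarith
  set a := σ / 4 with had
  have ha : 0 < a := by positivity
  set l := 2 * M / a with hld
  have hl : 0 < l := by positivity
  have hal : a * l = 2 * M := by rw [hld]; field_simp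
  set c := a * l * Real.exp (l * (0 - t₀)) with hcd
  have hc : 0 < c := by positivity
  have hgc : ∀ t, 0 ≤ t → c ≤ a * l * Real.exp (l * (t - t₀)) := by
    intro t ht
    have : l * (0 - t₀) ≤ l * (t - t₀) := by gcongr
    have := Real.exp_le_exp.2 this
    rw [hcd]; gcongr
  have hgT : 2 * M < a * Real.exp (l * (T - t₀)) := by
    have e : l * (T - t₀) = l := by rw [hTd]; ring
    rw [e]
    have := Real.add_one_le_exp l
    nlinarith
  -- separation
  obtain ⟨ρ, hρ, hsep⟩ : ∃ ρ : ℝ, 0 < ρ ∧ ∀ i x t y s, ‖x‖ ≤ (n : ℝ) + 2 → ‖y‖ ≤ (n : ℝ) + 2 →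
      0 ≤ t → t ≤ T → 0 ≤ s → s ≤ T → σ / 2 ≤ u i (x, t) - v i (y, s) →
      ρ ≤ t + s + ‖x - y‖ := by
    choose r hr hr' using fun i => init_sep (u i) (v i) (hu i) (hv i) T (σ / 2) (by positivity)
      (hinit i)
    refine ⟨min (r true) (r false), lt_min (hr _) (hr _), ?_⟩
    intro i x t y s h1 h2 h3 h4 h5 h6 h7
    have := hr' i x t y s h1 h2 h3 h4 h5 h6 h7
    cases i
    · exact (min_le_right _ _).trans this
    · exact (min_le_left _ _).trans this
  set β := (8 * M + 4) / ρ ^ 2 with hβd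
  have hβ : 0 < β := by positivity
  obtain ⟨R, hR⟩ : ∃ R : ℝ, ∀ i x p, R ≤ ‖p‖ → 2 * β * T + 2 * M + 1 ≤ H i x p := by
    choose r hr using fun i => hco i (2 * β * T + 2 * M + 1)
    refine ⟨max (r true) (r false), ?_⟩
    intro i x p hp
    apply hr i x p
    cases i
    · exact (le_max_right _ _).trans hp
    · exact (le_max_left _ _).trans hp
  obtain ⟨ρ', hρ', hHu⟩ : ∃ ρ : ℝ, 0 < ρ ∧ ∀ i, ∀ x y p : En n, ‖x‖ ≤ (n : ℝ) + 2 →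
      ‖y‖ ≤ (n : ℝ) + 2 → ‖p‖ ≤ R → ‖x - y‖ < ρ → H i y p - H i x p < 2 * c := by
    choose r hr hr' using fun i => H_unif (H i) (hH i) ((n : ℝ) + 2) R (2 * c) (by positivity)
    refine ⟨min (r true) (r false), lt_min (hr _) (hr _), ?_⟩
    intro i x y p h1 h2 h3 h4
    apply hr' i x y p h1 h2 h3
    cases i
    · exact h4.trans_le (min_le_right _ _)
    · exact h4.trans_le (min_le_left _ _)
  set α := (8 * M + 4) / ρ ^ 2 + (8 * M + 4) / ρ' ^ 2 + (2 * M + 1) with hαd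
  have p1 : 0 < (8 * M + 4) / ρ ^ 2 := by positivity
  have p2 : 0 < (8 * M + 4) / ρ' ^ 2 := by positivity
  have hα : 0 < α := by positivity
  have hstart : Psi u v α β a l t₀ i₀ ((x₀, t₀), (x₀, t₀)) = σ / 2 := by
    simp only [Psi, sub_self, norm_zero, mul_zero, Real.exp_zero]
    rw [← hσd, had]; ring
  have hT0 : 0 ≤ T := by rw [hTd]; linarith
  have htT : t₀ ≤ T := by rw [hTd]; linarith
  obtain ⟨i, x, t, y, s, hx, hy, ht0, htT', hs0, hsT', hmax⟩ :=
    Psi_max u v hu hv hup hvp α β a l t₀ T M hT0 hβ.le ha.le (by linarith) hα.le huM hvM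
      ⟨i₀, x₀, t₀, x₀, t₀, ht₀, htT, ht₀, htT, by rw [hstart]; positivity⟩
  have hval : σ / 2 ≤ Psi u v α β a l t₀ i ((x, t), (y, s)) := by
    rw [← hstart]; exact hmax i₀ x₀ t₀ x₀ t₀ ht₀ htT ht₀ htT
  have b1 := huM i x t ht0 htT'
  have b2 := hvM i y s hs0 hsT'
  have b3 : 0 ≤ α * ‖x - y‖ ^ 2 := by positivity
  have b4 : 0 ≤ β * (t - s) ^ 2 := by positivity
  have b5 : 0 ≤ a * Real.exp (l * (t - t₀)) := by positivity
  have b6 : 0 ≤ a * Real.exp (l * (s - t₀)) := by positivity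
  have hval' := hval
  simp only [Psi] at hval'
  have hxyρ : ‖x - y‖ < ρ / 2 := small_of (A := α) hρ (by linarith) (norm_nonneg _) hM0 (by linarith)
  have hxyρ' : ‖x - y‖ < ρ' / 2 := small_of (A := α) hρ' (by linarith) (norm_nonneg _) hM0 (by linarith)
  have htsρ : |t - s| < ρ / 2 :=
    small_of hρ hβd.ge (abs_nonneg _) hM0 (by rw [sq_abs]; linarith)
  have hts := abs_lt.1 htsρ
  have hsep' := hsep i x t y s hx hy ht0 htT' hs0 hsT' (by linarith)
  have htpos : 0 < t := by
    rcases ht0.eq_or_lt with h | h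
    · rw [← h] at hsep' hts; linarith [hts.1]
    · exact h
  have hspos : 0 < s := by
    rcases hs0.eq_or_lt with h | h
    · rw [← h] at hsep' hts; linarith [hts.2]
    · exact h
  have htlt : t < T := by
    rcases htT'.eq_or_lt with h | h
    · rw [h] at hval'; rw [h] at b4 b1; linarith
    · exact h
  have hslt : s < T := by
    rcases hsT'.eq_or_lt with h | h
    · rw [h] at hval'; rw [h] at b4 b2; linarith
    · exact h
  -- sub inequality
  have S1 := hsub i (tstF α β a l t₀ y s) (tstF_contDiff _ _ _ _ _ _ _) x t htpos (by
    have hev : ∀ᶠ q : En n × ℝ in 𝓝 (x, t), q.2 ∈ Ioo 0 T :=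
      continuous_snd.continuousAt.eventually_mem (Ioo_mem_nhds htpos htlt)
    filter_upwards [hev] with q hq
    have := hmax i q.1 q.2 y s hq.1.le hq.2.le hs0 hsT'
    simp only [Psi] at this
    simp only [tstF]
    linarith)
  have S2 := hsup i (tstF (-α) (-β) (-a) l t₀ x t) (tstF_contDiff _ _ _ _ _ _ _) y s hspos (by
    have hev : ∀ᶠ q : En n × ℝ in 𝓝 (y, s), q.2 ∈ Ioo 0 T :=
      continuous_snd.continuousAt.eventually_mem (Ioo_mem_nhds hspos hslt)
    filter_upwards [hev] with q hq
    have := hmax i x t q.1 q.2 ht0 htT' hq.1.le hq.2.le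
    simp only [Psi] at this
    simp only [tstF]
    rw [norm_sub_rev q.1 x, norm_sub_rev y x]
    have e1 : (q.2 - t) ^ 2 = (t - q.2) ^ 2 := by ring
    have e2 : (s - t) ^ 2 = (t - s) ^ 2 := by ring
    rw [e1, e2]
    linarith)
  rw [tstF_fderiv, tstF_gradient] at S1 S2
  have ep : (2 * -α) • (y - x) = (2 * α) • (x - y) := by
    rw [← neg_sub x y, smul_neg, mul_neg, neg_smul, neg_neg]
  rw [ep] at S2
  set p := (2 * α) • (x - y) with hp
  have g1 := hgc t ht0
  have g2 := hgc s hs0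
  have b7 := huM (!i) x t ht0 htT'
  have hcoup := hmax (!i) x t y s ht0 htT' hs0 hsT'
  simp only [Psi] at hcoup
  have hpR : ‖p‖ ≤ R := by
    by_contra hlt
    push Not at hlt
    have := hR i x p hlt.le
    have : -(β * T) ≤ β * (t - s) := by
      have h1 : -T ≤ t - s := by linarith
      have h2 := mul_le_mul_of_nonneg_left h1 hβ.le
      linarith
    linarith
  have := hHu i x y p hx hy hpR (by linarith)
  linarith

noncomputable def clampT {n : ℕ} (q : En n × ℝ) : En n × ℝ := (q.1, max q.2 0)

lemma clampT_eq {n : ℕ} (x : En n) (t : ℝ) (ht : 0 ≤ t) : clampT (x, t) = (x, t) := by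
  simp [clampT, ht]

lemma clampT_cont {n : ℕ} : Continuous (clampT (n := n)) := by unfold clampT; fun_prop

lemma clampT_ev {n : ℕ} (w φ : En n × ℝ → ℝ) (x : En n) (t : ℝ) (ht : 0 < t) :
    (fun q => (w ∘ clampT) q - φ q) =ᶠ[𝓝 (x, t)] (fun q => w q - φ q) := by
  have hev : ∀ᶠ q : En n × ℝ in 𝓝 (x, t), q.2 ∈ Ioi 0 :=
    continuous_snd.continuousAt.eventually_mem (Ioi_mem_nhds ht)
  filter_upwards [hev] with q hq
  have : clampT q = q := clampT_eq q.1 q.2 (le_of_lt hq)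
  simp [this]

lemma clamp_sub {n : ℕ} (H : En n → En n → ℝ) (u w : En n × ℝ → ℝ) (h : EvolSubIneq H u w) :
    EvolSubIneq H (u ∘ clampT) (w ∘ clampT) := by
  intro φ hφ x t ht hm
  have := h φ hφ x t ht (hm.congr (clampT_ev u φ x t ht))
  simpa [Function.comp, clampT_eq x t ht.le] using this

lemma clamp_super {n : ℕ} (H : En n → En n → ℝ) (u w : En n × ℝ → ℝ) (h : EvolSuperIneq H u w) :
    EvolSuperIneq H (u ∘ clampT) (w ∘ clampT) := by
  intro φ hφ x t ht hm
  have := h φ hφ x t ht (hm.congr (clampT_ev u φ x t ht))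
  simpa [Function.comp, clampT_eq x t ht.le] using this

lemma clamp_usc {n : ℕ} (u : En n × ℝ → ℝ) (h : UpperSemicontinuousOn u {q : En n × ℝ | 0 ≤ q.2}) :
    UpperSemicontinuous (u ∘ clampT) := by
  rw [← upperSemicontinuousOn_univ_iff]
  exact h.comp clampT_cont.continuousOn (fun q _ => by simp [clampT])

lemma clamp_lsc {n : ℕ} (u : En n × ℝ → ℝ) (h : LowerSemicontinuousOn u {q : En n × ℝ | 0 ≤ q.2}) :
    LowerSemicontinuous (u ∘ clampT) := by
  rw [← lowerSemicontinuousOn_univ_iff]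
  exact h.comp clampT_cont.continuousOn (fun q _ => by simp [clampT])

lemma clamp_per {n : ℕ} (u : En n × ℝ → ℝ) (h : ZPeriodicST u) : ZPeriodicST (u ∘ clampT) :=
  fun x k t => h x k (max t 0)

end Helpers

/-- Comparison principle for system (C). -/
theorem stmt1 (n : ℕ) (hn : 1 ≤ n) (H₁ H₂ : En n → En n → ℝ)
    (hH₁cont : Continuous fun q : En n × En n => H₁ q.1 q.2)
    (hH₂cont : Continuous fun q : En n × En n => H₂ q.1 q.2)
    (hH₁per : ZPeriodicH H₁) (hH₂per : ZPeriodicH H₂)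
    (hH₁coer : Coercive H₁) (hH₂coer : Coercive H₂)
    (u₁ u₂ v₁ v₂ : En n × ℝ → ℝ)
    (hu₁per : ZPeriodicST u₁) (hu₂per : ZPeriodicST u₂)
    (hv₁per : ZPeriodicST v₁) (hv₂per : ZPeriodicST v₂)
    (hu₁usc : UpperSemicontinuousOn u₁ {q : En n × ℝ | 0 ≤ q.2})
    (hu₂usc : UpperSemicontinuousOn u₂ {q : En n × ℝ | 0 ≤ q.2})
    (hv₁lsc : LowerSemicontinuousOn v₁ {q : En n × ℝ | 0 ≤ q.2})
    (hv₂lsc : LowerSemicontinuousOn v₂ {q : En n × ℝ | 0 ≤ q.2})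
    (hsub : SysSub H₁ H₂ u₁ u₂) (hsuper : SysSuper H₁ H₂ v₁ v₂)
    (hinit₁ : ∀ x : En n, u₁ (x, 0) ≤ v₁ (x, 0))
    (hinit₂ : ∀ x : En n, u₂ (x, 0) ≤ v₂ (x, 0)) :
    ∀ (x : En n) (t : ℝ), 0 ≤ t → u₁ (x, t) ≤ v₁ (x, t) ∧ u₂ (x, t) ≤ v₂ (x, t) := by
  have key := core_s1 (fun b => cond b H₁ H₂) (by rintro (_ | _) <;> assumption)
    (by rintro (_ | _) <;> assumption)
    (fun b => cond b u₁ u₂ ∘ clampT) (fun b => cond b v₁ v₂ ∘ clampT)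
    (by rintro (_ | _) <;> apply clamp_per <;> assumption)
    (by rintro (_ | _) <;> apply clamp_per <;> assumption)
    (by rintro (_ | _) <;> apply clamp_usc <;> assumption)
    (by rintro (_ | _) <;> apply clamp_lsc <;> assumption)
    (by rintro (_ | _) <;> apply clamp_sub <;> [exact hsub.2; exact hsub.1])
    (by rintro (_ | _) <;> apply clamp_super <;> [exact hsuper.2; exact hsuper.1])
    (by
      rintro (_ | _) x <;> simp only [Function.comp, clampT_eq x 0 le_rfl]
      · exact hinit₂ x
      · exact hinit₁ x)
  intro x t ht
  have k1 := key true x t ht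
  have k2 := key false x t ht
  simp only [Function.comp, clampT_eq x t ht] at k1 k2
  exact ⟨k1, k2⟩
end
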